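/- For β>1 and h>0 small enough, as N→∞, 𝔼^{CW}_{m_-(N)}[τ_{m_+(N)}] = exp(βN[f_β(m*)−f_β(m_-)]) · (π/(1+m*)) · √((1−(m*)²)/(1−m_-²)) · N(1+o(1)) / ( β·√( f''_β(m_-)·(−f''_β(m*)) ) ). -/

import Mathlib

open MeasureTheory Filter Finset
open scoped Classical ENNReal NNReal Topology

noncomputable section

namespace RDCW

/-- The real value of a Boolean spin. -/
def spin (b : Bool) : ℝ := if b then 1 else -1

/-- Spin configurations on `N` vertices. -/
abbrev Conf (N : ℕ) := Fin N → Bool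

/-- Empirical magnetisation. -/
def mag {N : ℕ} (σ : Conf N) : ℝ := (N : ℝ)⁻¹ * ∑ i, spin (σ i)

/-- The set `Γ_N` of attainable magnetisations. -/
def Gamma (N : ℕ) : Set ℝ := Set.range (fun σ : Conf N => mag σ)

/-- `Γ_N` as a finite set. -/
def GammaF (N : ℕ) : Finset ℝ :=
  Finset.image (fun σ : Conf N => mag σ) Finset.univ

/-- Configurations with magnetisation `m`, as a finset. -/
def level (N : ℕ) (m : ℝ) : Finset (Conf N) := Finset.univ.filter fun σ => mag σ = m

/-- Configurations with magnetisation `m`, as a set (`S_N[m]`). -/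
def SLev (N : ℕ) (m : ℝ) : Set (Conf N) := {σ | mag σ = m}

/-- The entropy `I_N(m) = -(1/N) log |S_N[m]|`
(for `m ∈ Γ_N` the cardinality is the binomial coefficient `C(N, (1+m)N/2)`). -/
def IN (N : ℕ) (m : ℝ) : ℝ := -(N : ℝ)⁻¹ * Real.log ((level N m).card)

/-- Two configurations differ by a single spin flip. -/
def Nbr {N : ℕ} (σ σ' : Conf N) : Prop :=
  (Finset.univ.filter fun i => σ i ≠ σ' i).card = 1

/-- The index set of the couplings: pairs `i < j`. -/
abbrev CIdx (N : ℕ) := {ij : Fin N × Fin N // ij.1 < ij.2}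

/-- A realisation of the random couplings. -/
abbrev Couplings (N : ℕ) := CIdx N → Bool

/-- Real value of a coupling. -/
def Jval {N : ℕ} (J : Couplings N) (e : CIdx N) : ℝ := if J e then 1 else 0

/-- The RDCW Hamiltonian. -/
def H (N : ℕ) (p h : ℝ) (J : Couplings N) (σ : Conf N) : ℝ :=
  -((N : ℝ) * p)⁻¹ * ∑ e : CIdx N, Jval J e * spin (σ e.1.1) * spin (σ e.1.2)
    - h * ∑ i, spin (σ i)

/-- The Curie--Weiss Hamiltonian. -/
def Hcw (N : ℕ) (h : ℝ) (σ : Conf N) : ℝ :=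
  -(N : ℝ)⁻¹ * ∑ e : CIdx N, spin (σ e.1.1) * spin (σ e.1.2) - h * ∑ i, spin (σ i)

/-- The centred random part `Δ` of the Hamiltonian. -/
def Delta (N : ℕ) (p : ℝ) (J : Couplings N) (σ : Conf N) : ℝ :=
  -((N : ℝ) * p)⁻¹ * ∑ e : CIdx N, (Jval J e - p) * spin (σ e.1.1) * spin (σ e.1.2)

/-- Partition function for a Hamiltonian. -/
def Z (N : ℕ) (β : ℝ) (Ham : Conf N → ℝ) : ℝ := ∑ σ : Conf N, Real.exp (-β * Ham σ)

/-- Gibbs measure for a Hamiltonian. -/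
def gibbs (N : ℕ) (β : ℝ) (Ham : Conf N → ℝ) (σ : Conf N) : ℝ :=
  Real.exp (-β * Ham σ) / Z N β Ham

/-- Off-diagonal Metropolis rates. -/
def flipP (N : ℕ) (β : ℝ) (Ham : Conf N → ℝ) (σ σ' : Conf N) : ℝ :=
  if Nbr σ σ' then (N : ℝ)⁻¹ * Real.exp (-β * max (Ham σ' - Ham σ) 0) else 0

/-- Metropolis (Glauber) transition probabilities. -/
def transP (N : ℕ) (β : ℝ) (Ham : Conf N → ℝ) (σ σ' : Conf N) : ℝ :=
  if σ' = σ then 1 - ∑ η ∈ Finset.univ.erase σ, flipP N β Ham σ η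
  else flipP N β Ham σ σ'

/-- Probability of a finite trajectory of a Markov chain with kernel `P`. -/
def pathProb {S : Type*} (P : S → S → ℝ) : S → List S → ℝ
  | _, [] => 1
  | x, y :: l => P x y * pathProb P y l

/-- `FirstHit A B l` says that the (time ≥ 1) trajectory `l` stays outside `A ∪ B`
until its final state, which belongs to `B`; this is the cylinder event
`{τ_B < τ_A, τ_B = l.length}`. -/
def FirstHit {S : Type*} (A B : Set S) : List S → Prop
  | [] => False
  | [x] => x ∈ B
  | x :: y :: l => x ∉ A ∧ x ∉ B ∧ FirstHit A B (y :: l)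

/-- `ℙ_σ(τ_B < τ_A)` for the chain with kernel `P`. -/
def hitProb {S : Type*} (P : S → S → ℝ) (σ : S) (A B : Set S) : ℝ :=
  ∑' l : List S, if FirstHit A B l then pathProb P σ l else 0

/-- `𝔼_σ[τ_B]` for the chain with kernel `P`. -/
def hitTimeExp {S : Type*} (P : S → S → ℝ) (σ : S) (B : Set S) : ℝ :=
  ∑' l : List S, if FirstHit (∅ : Set S) B l then (l.length : ℝ) * pathProb P σ l else 0

/-- The harmonic function `h_{A,B}`. -/
def harm {S : Type*} (P : S → S → ℝ) (A B : Set S) (σ : S) : ℝ :=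
  if σ ∈ A then 1 else if σ ∈ B then 0 else hitProb P σ B A

/-- Capacity via the Dirichlet principle. -/
def capac (N : ℕ) (β : ℝ) (Ham : Conf N → ℝ) (A B : Set (Conf N)) : ℝ :=
  sInf {x : ℝ | ∃ f : Conf N → ℝ, (∀ σ, 0 ≤ f σ ∧ f σ ≤ 1) ∧
    (∀ σ ∈ A, f σ = 1) ∧ (∀ σ ∈ B, f σ = 0) ∧
    x = ∑ σ : Conf N, ∑ σ' : Conf N,
      gibbs N β Ham σ * transP N β Ham σ σ' * (f σ - f σ') ^ 2}

/-- Bernoulli measure on `Bool`. -/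
def bern (p : ℝ) : Measure Bool :=
  p.toNNReal • Measure.dirac true + (1 - p).toNNReal • Measure.dirac false

instance (p : ℝ) : IsFiniteMeasure (bern p) := by unfold bern; infer_instance

/-- The joint law `ℙ_J` of the i.i.d. Bernoulli(p) couplings. -/
def PJ (N : ℕ) (p : ℝ) : Measure (Couplings N) := Measure.pi fun _ => bern p

/-- `E(m) = -m²/2 - hm`. -/
def Em (h m : ℝ) : ℝ := -m ^ 2 / 2 - h * m

/-- Transition probabilities of the Curie--Weiss magnetisation chain on `ℝ ⊇ Γ_N`. -/
def rCW (N : ℕ) (β h : ℝ) (m m' : ℝ) : ℝ :=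
  if m' = m + 2 / N then Real.exp (-β * N * max (Em h m' - Em h m) 0) * ((1 - m) / 2)
  else if m' = m - 2 / N then Real.exp (-β * N * max (Em h m' - Em h m) 0) * ((1 + m) / 2)
  else if m' = m then
    1 - Real.exp (-β * N * max (Em h (m + 2 / N) - Em h m) 0) * ((1 - m) / 2)
      - Real.exp (-β * N * max (Em h (m - 2 / N) - Em h m) 0) * ((1 + m) / 2)
  else 0

/-- The entropy `I(m)`. -/
def Ient (m : ℝ) : ℝ :=
  (1 - m) / 2 * Real.log ((1 - m) / 2) + (1 + m) / 2 * Real.log ((1 + m) / 2)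

/-- The Curie--Weiss free energy `f_β(m) = E(m) + β⁻¹ I(m)`. -/
def fE (β h m : ℝ) : ℝ := Em h m + β⁻¹ * Ient m

/-- The double-well structure of `f_β` in the metastable regime `β > 1`, `h > 0` small:
two local minima `m_- < 0 < m_+` and a local maximum `m* ∈ (m_-, m_+)`, all solving
`m = tanh(β(m+h))`, with `f_β(m_-) > f_β(m_+)`. -/
structure DoubleWell (β h mminus mstar mplus : ℝ) : Prop where
  lt_star : mminus < mstar
  star_lt : mstar < mplus
  neg : mminus < 0
  pos : 0 < mplus
  locmin_minus : IsLocalMin (fE β h) mminus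
  locmin_plus : IsLocalMin (fE β h) mplus
  locmax_star : IsLocalMax (fE β h) mstar
  fix_minus : mminus = Real.tanh (β * (mminus + h))
  fix_star : mstar = Real.tanh (β * (mstar + h))
  fix_plus : mplus = Real.tanh (β * (mplus + h))
  f_lt : fE β h mplus < fE β h mminus

/-- `y` is a point of `s` closest to `x`. -/
def ClosestIn (s : Set ℝ) (x y : ℝ) : Prop := y ∈ s ∧ ∀ z ∈ s, |x - y| ≤ |x - z|

/-- `α = β²(1-p)/(4p)`. -/
def alphaC (β p : ℝ) : ℝ := β ^ 2 * (1 - p) / (4 * p)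

/-- `κ = α + sup_{η∈(0,1)} [log η - β √(2α + log(c₁/(1-η)²)) / (p √(2c₂))]`. -/
def kappaC (β p c₁ c₂ : ℝ) : ℝ :=
  alphaC β p + sSup ((fun η : ℝ => Real.log η -
      β * Real.sqrt (2 * alphaC β p + Real.log (c₁ / (1 - η) ^ 2)) /
        (p * Real.sqrt (2 * c₂))) '' Set.Ioo (0 : ℝ) 1)

/-- Talagrand's concentration inequality with constants `c₁, c₂`: for every `M`, every
convex function `G` which is 1-Lipschitz w.r.t. the Euclidean norm, and independent
random variables `X₁, …, X_M` (jointly a product measure) bounded by `K`,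
`ℙ(|G(X) - 𝔼 G(X)| ≥ tK) ≤ c₁ e^{-c₂ t²}`. -/
def IsTalagrand (c₁ c₂ : ℝ) : Prop :=
  ∀ (M : ℕ) (G : (Fin M → ℝ) → ℝ),
    ConvexOn ℝ Set.univ G →
    (∀ x y : Fin M → ℝ, |G x - G y| ≤ Real.sqrt (∑ i, (x i - y i) ^ 2)) →
    ∀ (μ : Fin M → Measure ℝ) [∀ i, IsProbabilityMeasure (μ i)],
      ∀ K : ℝ, 0 < K → (∀ i, ∀ᵐ x ∂μ i, |x| ≤ K) →
        ∀ t : ℝ, 0 ≤ t →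
          (Measure.pi μ {x | t * K ≤ |G x - ∫ y, G y ∂Measure.pi μ|}).toReal ≤
            c₁ * Real.exp (-c₂ * t ^ 2)

/-- `𝒵_{N,g}` (with `e^{-βΔ}`). -/
def Zg (N : ℕ) (p β : ℝ) (g : ℝ → ℝ) (J : Couplings N) : ℝ :=
  ∑ m ∈ GammaF N, g m * ∑ σ ∈ level N m, Real.exp (-β * Delta N p J σ)

/-- The variant of `𝒵_{N,g}` with `e^{+βΔ}`. -/
def ZgPlus (N : ℕ) (p β : ℝ) (g : ℝ → ℝ) (J : Couplings N) : ℝ :=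
  ∑ m ∈ GammaF N, g m * ∑ σ ∈ level N m, Real.exp (β * Delta N p J σ)

/-- `F_{N,g} = (1/N) log 𝒵_{N,g}`. -/
def Fg (N : ℕ) (p β : ℝ) (g : ℝ → ℝ) (J : Couplings N) : ℝ :=
  (N : ℝ)⁻¹ * Real.log (Zg N p β g J)

/-- `p_{N,g} = 𝔼[F_{N,g}]`. -/
def pg (N : ℕ) (p β : ℝ) (g : ℝ → ℝ) : ℝ := ∫ J, Fg N p β g J ∂PJ N p

/-- `∑_{m∈Γ_N} g(m) e^{-N I_N(m)}`. -/
def entSum (N : ℕ) (g : ℝ → ℝ) : ℝ := ∑ m ∈ GammaF N, g m * Real.exp (-(N : ℝ) * IN N m)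

/-- Mesoscopic measure `Q_{β,N}(m)`. -/
def Qmeso (N : ℕ) (β : ℝ) (Ham : Conf N → ℝ) (m : ℝ) : ℝ :=
  ∑ σ ∈ level N m, gibbs N β Ham σ

/-- `𝔼_{ν_{A,B}}[τ_B]`, where `ν_{A,B}` is the last-exit biased distribution on `A`. -/
def lastExitMeanHit (N : ℕ) (β : ℝ) (Ham : Conf N → ℝ) (A B : Set (Conf N)) : ℝ :=
  (∑ σ ∈ Finset.univ.filter (· ∈ A),
      gibbs N β Ham σ * hitProb (transP N β Ham) σ A B * hitTimeExp (transP N β Ham) σ B) /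
  (∑ σ ∈ Finset.univ.filter (· ∈ A), gibbs N β Ham σ * hitProb (transP N β Ham) σ A B)

/-- The unit flow `φ_N` on the magnetisation space. -/
def phiFlow (N : ℕ) (m₁ m₂ m m' : ℝ) : ℝ :=
  if m' = m + 2 / N ∧ m₁ ≤ m ∧ m ≤ m₂ - 2 / N then
    ((1 - m) * N / 2 * Real.exp (-(N : ℝ) * IN N m))⁻¹
  else if m' = m - 2 / N ∧ m₁ + 2 / N ≤ m ∧ m ≤ m₂ then
    -((1 + m) * N / 2 * Real.exp (-(N : ℝ) * IN N m))⁻¹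
  else 0

/-- `U_δ = {m ∈ [-1,1] : f_β(m) ≤ f_β(m_-) + δ}`. -/
def Uset (β h mminus δ : ℝ) : Set ℝ :=
  {m | m ∈ Set.Icc (-1 : ℝ) 1 ∧ fE β h m ≤ fE β h mminus + δ}

/-- `U_δ(m_+)`: the connected component of `U_δ` containing `m_+`. -/
def Ucomp (β h mminus mplus δ : ℝ) : Set ℝ := connectedComponentIn (Uset β h mminus δ) mplus

/-- The function `ℓ_N`. -/
def ellN (β h mpN x : ℝ) : ℝ :=
  (1 / 2) * (x * (Real.log 2 + β * |2 - 2 * h| + 1)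
    - (1 - mpN + x) * Real.log (1 - mpN + x) + (1 - mpN) * Real.log (1 - mpN))

/-- Specification of `δ_N`. -/
def DeltaNSpec (β h mminus mplus δ : ℝ) (N : ℕ) (d : ℝ) : Prop :=
  IsGreatest {d' : ℝ | 0 < d' ∧ d' ≤ δ ∧
    ∃ m ∈ Ucomp β h mminus mplus δ ∩ Gamma N, m < mplus ∧ fE β h m = fE β h mminus + d'} d

/-- Specification of `m_{δ_N}`: the left endpoint of `U_{δ_N}(m_+) ∩ Γ_N`,
with `f_β(m_{δ_N}) = f_β(m_-) + δ_N`. -/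
def MdeltaSpec (β h mminus mplus dN : ℝ) (N : ℕ) (x : ℝ) : Prop :=
  IsLeast (Ucomp β h mminus mplus dN ∩ Gamma N) x ∧ fE β h x = fE β h mminus + dN

/-- Specification of `ε_N`. -/
def EpsNSpec (β h mminus mplus dN ε : ℝ) (N : ℕ) (e : ℝ) : Prop :=
  IsGreatest {e' : ℝ | 0 < e' ∧ e' ≤ ε ∧
    ∃ m ∈ Ucomp β h mminus mplus dN ∩ Gamma N, m < mplus ∧ fE β h m = fE β h mplus + e'} e

/-- Specification of `m_{ε_N}`. -/
def MepsSpec (β h mminus mplus dN eN : ℝ) (N : ℕ) (x : ℝ) : Prop :=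
  x ∈ Ucomp β h mminus mplus dN ∩ Gamma N ∧ x < mplus ∧ fE β h x = fE β h mplus + eN


/-- Lists of length at most `n` with entries in `W`. -/
def listsUpTo {S : Type*} (W : Finset S) : ℕ → Finset (List S)
  | 0 => {[]}
  | n + 1 => insert [] ((W ×ˢ listsUpTo W n).image (fun p => p.1 :: p.2))

lemma mem_listsUpTo {S : Type*} (W : Finset S) (n : ℕ) (l : List S) :
    l ∈ listsUpTo W n ↔ l.length ≤ n ∧ ∀ x ∈ l, x ∈ W := by
  induction n generalizing l with
  | zero =>
    simp only [listsUpTo, Finset.mem_singleton, Nat.le_zero, List.length_eq_zero_iff]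
    constructor
    · rintro rfl; simp
    · exact fun h => h.1
  | succ n ih =>
    cases l with
    | nil => simp [listsUpTo]
    | cons y l =>
      simp only [listsUpTo, Finset.mem_insert, Finset.mem_image, Finset.mem_product, Prod.exists]
      constructor
      · rintro (h | ⟨a, b, ⟨ha, hb⟩, h⟩)
        · simp at h
        · obtain ⟨rfl, rfl⟩ := List.cons.inj h
          rw [ih] at hb
          refine ⟨by simpa using hb.1, ?_⟩
          intro x hx
          rcases List.mem_cons.1 hx with rfl | hx
          · exact ha
          · exact hb.2 x hx
      · rintro ⟨h1, h2⟩
        refine Or.inr ⟨y, l, ⟨h2 y (by simp), ?_⟩, rfl⟩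
        rw [ih]
        exact ⟨by simpa using h1, fun x hx => h2 x (by simp [hx])⟩

lemma sum_listsUpTo_succ {S : Type*} (W : Finset S) (n : ℕ) (g : List S → ℝ) :
    ∑ l ∈ listsUpTo W (n + 1), g l = g [] + ∑ y ∈ W, ∑ l ∈ listsUpTo W n, g (y :: l) := by
  rw [listsUpTo, Finset.sum_insert (by simp), Finset.sum_image, Finset.sum_product]
  rintro ⟨a, b⟩ _ ⟨c, d⟩ _ h
  simpa using h

lemma firstHit_cons_of_mem {S : Type*} (B : Set S) (y : S) (hy : y ∈ B) (l : List S) :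
    FirstHit ∅ B (y :: l) ↔ l = [] := by
  cases l with
  | nil => simp [FirstHit, hy]
  | cons z l => simp [FirstHit, hy]

lemma firstHit_cons_of_not_mem {S : Type*} (B : Set S) (y : S) (hy : y ∉ B) (l : List S) :
    FirstHit ∅ B (y :: l) ↔ FirstHit ∅ B l := by
  cases l with
  | nil => simp [FirstHit, hy]
  | cons z l => simp [FirstHit, hy]

/-- survival probabilities -/
def surv {S : Type*} (P : S → S → ℝ) (V : Finset S) : ℕ → S → ℝ
  | 0, _ => 1
  | n + 1, x => ∑ y ∈ V, P x y * surv P V n y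

section hit
variable {S : Type*} (P : S → S → ℝ) (V : Finset S) (b : S)

lemma pathProb_nonneg_of_firstHit (hP0 : ∀ x ∈ V, ∀ y, 0 ≤ P x y)
    (hPz : ∀ x ∈ V, ∀ y, y ≠ b → y ∉ V → P x y = 0)
    (l : List S) : ∀ x ∈ V, FirstHit ∅ {b} l → 0 ≤ pathProb P x l := by
  induction l with
  | nil => intro x _ _; simp [pathProb]
  | cons y l ih =>
    intro x hx hl
    rw [pathProb]
    by_cases hy : y = b
    · rw [firstHit_cons_of_mem _ _ (by simp [hy])] at hl
      subst hl
      simpa [pathProb] using hP0 x hx y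
    · rw [firstHit_cons_of_not_mem _ _ (by simp [hy])] at hl
      by_cases hyV : y ∈ V
      · exact mul_nonneg (hP0 x hx y) (ih y hyV hl)
      · rw [hPz x hx y hy hyV]; simp

lemma pathProb_eq_zero_of_firstHit 
    (hPz : ∀ x ∈ V, ∀ y, y ≠ b → y ∉ V → P x y = 0)
    (l : List S) : ∀ x ∈ V, FirstHit ∅ {b} l → (¬ ∀ y ∈ l, y ∈ insert b V) →
      pathProb P x l = 0 := by
  induction l with
  | nil => intro x _ _ h; simp at h
  | cons y l ih =>
    intro x hx hl hn
    rw [pathProb]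
    by_cases hy : y = b
    · rw [firstHit_cons_of_mem _ _ (by simp [hy])] at hl
      subst hl
      simp [hy] at hn
    · rw [firstHit_cons_of_not_mem _ _ (by simp [hy])] at hl
      by_cases hyV : y ∈ V
      · rw [ih y hyV hl, mul_zero]
        intro h
        apply hn
        intro z hz
        rcases List.mem_cons.1 hz with rfl | hz
        · simp [hyV]
        · exact h z hz
      · rw [hPz x hx y hy hyV]; simp

lemma hitTimeExp_eq (hb : b ∉ V)
    (hP0 : ∀ x ∈ V, ∀ y, 0 ≤ P x y)
    (hPz : ∀ x ∈ V, ∀ y, y ≠ b → y ∉ V → P x y = 0)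
    (hP1 : ∀ x ∈ V, P x b + ∑ y ∈ V, P x y = 1)
    (T : S → ℝ) (hT0 : ∀ x ∈ V, 0 ≤ T x)
    (hT : ∀ x ∈ V, T x = 1 + ∑ y ∈ V, P x y * T y) (x : S) (hx : x ∈ V) :
    hitTimeExp P x {b} = T x := by
  have hnil : ¬ FirstHit (∅ : Set S) {b} [] := by simp [FirstHit]
  have hG : ∀ n, ∀ x ∈ V, ∑ l ∈ listsUpTo (insert b V) n,
      (if FirstHit (∅ : Set S) {b} l then pathProb P x l else 0) = 1 - surv P V n x := by
    intro n
    induction n with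
    | zero => intro x hx; simp [listsUpTo, FirstHit, surv]
    | succ n ih =>
      intro x hx
      rw [sum_listsUpTo_succ, Finset.sum_insert hb]
      have h1 : ∑ l ∈ listsUpTo (insert b V) n,
          (if FirstHit (∅ : Set S) {b} (b :: l) then pathProb P x (b :: l) else 0) = P x b := by
        rw [Finset.sum_eq_single []]
        · simp [FirstHit, pathProb]
        · intro l _ hl
          rw [if_neg]
          rw [firstHit_cons_of_mem _ _ (by simp)]; exact hl
        · intro h; exact absurd ((mem_listsUpTo _ _ _).2 (by simp)) h
      have h2 : ∀ y ∈ V, ∑ l ∈ listsUpTo (insert b V) n,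
          (if FirstHit (∅ : Set S) {b} (y :: l) then pathProb P x (y :: l) else 0)
            = P x y * (1 - surv P V n y) := by
        intro y hy
        rw [← ih y hy, Finset.mul_sum]
        refine Finset.sum_congr rfl fun l _ => ?_
        have hyb : y ∉ ({b} : Set S) := by
          intro h; rw [Set.mem_singleton_iff] at h; exact hb (h ▸ hy)
        simp only [firstHit_cons_of_not_mem _ _ hyb, pathProb, mul_ite, mul_zero]
      rw [h1, Finset.sum_congr rfl h2]
      rw [if_neg hnil]
      simp only [surv, mul_sub, Finset.sum_sub_distrib, mul_one]
      have := hP1 x hx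
      linarith
  have hA : ∀ n, ∀ x ∈ V, ∑ l ∈ listsUpTo (insert b V) n,
      (if FirstHit (∅ : Set S) {b} l then (l.length : ℝ) * pathProb P x l else 0)
        = ∑ k ∈ range n, surv P V k x - n * surv P V n x := by
    intro n
    induction n with
    | zero => intro x hx; simp [listsUpTo, FirstHit, surv]
    | succ n ih =>
      intro x hx
      rw [sum_listsUpTo_succ, Finset.sum_insert hb]
      have h1 : ∑ l ∈ listsUpTo (insert b V) n,
          (if FirstHit (∅ : Set S) {b} (b :: l) then ((b :: l).length : ℝ) * pathProb P x (b :: l)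
            else 0) = P x b := by
        rw [Finset.sum_eq_single []]
        · simp [FirstHit, pathProb]
        · intro l _ hl
          rw [if_neg]
          rw [firstHit_cons_of_mem _ _ (by simp)]; exact hl
        · intro h; exact absurd ((mem_listsUpTo _ _ _).2 (by simp)) h
      have h2 : ∀ y ∈ V, ∑ l ∈ listsUpTo (insert b V) n,
          (if FirstHit (∅ : Set S) {b} (y :: l) then
            ((y :: l).length : ℝ) * pathProb P x (y :: l) else 0)
            = P x y * (∑ k ∈ range n, surv P V k y - n * surv P V n y)
              + P x y * (1 - surv P V n y) := by
        intro y hy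
        rw [← ih y hy, ← hG n y hy, Finset.mul_sum, Finset.mul_sum, ← Finset.sum_add_distrib]
        refine Finset.sum_congr rfl fun l _ => ?_
        have hyb : y ∉ ({b} : Set S) := by
          intro h; rw [Set.mem_singleton_iff] at h; exact hb (h ▸ hy)
        simp only [firstHit_cons_of_not_mem _ _ hyb, pathProb, List.length_cons]
        split_ifs
        · push_cast; ring
        · simp
      rw [h1, Finset.sum_congr rfl h2, Finset.sum_range_succ']
      rw [if_neg hnil]
      simp only [surv, mul_sub, Finset.sum_sub_distrib, mul_one, Finset.sum_add_distrib,
        Finset.mul_sum]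
      rw [Finset.sum_comm]
      have := hP1 x hx
      have h3 : ∑ y ∈ V, P x y * (n * surv P V n y) = n * ∑ y ∈ V, P x y * surv P V n y := by
        rw [Finset.mul_sum]; refine Finset.sum_congr rfl fun l _ => ?_; ring
      rw [h3]
      push_cast
      rw [← Finset.mul_sum]
      linarith
  -- decay
  obtain ⟨M, hM1, hM⟩ : ∃ M : ℝ, 1 < M ∧ ∀ x ∈ V, T x ≤ M := by
    refine ⟨2 + ∑ x ∈ V, T x, ?_, fun x hx => ?_⟩
    · have := Finset.sum_nonneg hT0; linarith
    · have := Finset.single_le_sum hT0 hx; linarith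
  set ρ : ℝ := 1 - 1 / M with hρ
  have hM0 : 0 < M := by linarith
  have hρ0 : 0 ≤ ρ := by
    rw [hρ, sub_nonneg, div_le_one hM0]; exact hM1.le
  have hρ1 : ρ < 1 := by
    rw [hρ]; have : 0 < 1 / M := by positivity
    linarith
  have hT1 : ∀ x ∈ V, 1 ≤ T x := by
    intro x hx
    rw [hT x hx]
    have : 0 ≤ ∑ y ∈ V, P x y * T y :=
      Finset.sum_nonneg fun y hy => mul_nonneg (hP0 x hx y) (hT0 y hy)
    linarith
  have hQT : ∀ x ∈ V, ∑ y ∈ V, P x y * T y ≤ ρ * T x := by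
    intro x hx
    have h1 := hT x hx
    have h2 : T x / M ≤ 1 := (div_le_one hM0).2 (hM x hx)
    have : ρ * T x = T x - T x / M := by rw [hρ]; ring
    linarith
  have hs0 : ∀ n, ∀ x ∈ V, 0 ≤ surv P V n x := by
    intro n
    induction n with
    | zero => intro x _; simp [surv]
    | succ n ih => intro x hx
                   exact Finset.sum_nonneg fun y hy => mul_nonneg (hP0 x hx y) (ih y hy)
  have hs : ∀ n, ∀ x ∈ V, surv P V n x ≤ ρ ^ n * T x := by
    intro n
    induction n with
    | zero => intro x hx; simpa [surv] using hT1 x hx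
    | succ n ih =>
      intro x hx
      calc surv P V (n + 1) x ≤ ∑ y ∈ V, P x y * (ρ ^ n * T y) :=
            Finset.sum_le_sum fun y hy => mul_le_mul_of_nonneg_left (ih y hy) (hP0 x hx y)
        _ = ρ ^ n * ∑ y ∈ V, P x y * T y := by
            rw [Finset.mul_sum]; refine Finset.sum_congr rfl fun l _ => ?_; ring
        _ ≤ ρ ^ n * (ρ * T x) := mul_le_mul_of_nonneg_left (hQT x hx) (pow_nonneg hρ0 n)
        _ = ρ ^ (n + 1) * T x := by ring
  have hD : ∀ n, ∀ x ∈ V, 0 ≤ T x - ∑ k ∈ range n, surv P V k x ∧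
      T x - ∑ k ∈ range n, surv P V k x ≤ ρ ^ n * T x := by
    intro n
    induction n with
    | zero => intro x hx; simpa using hT0 x hx
    | succ n ih =>
      intro x hx
      have e : T x - ∑ k ∈ range (n + 1), surv P V k x
          = ∑ y ∈ V, P x y * (T y - ∑ k ∈ range n, surv P V k y) := by
        rw [Finset.sum_range_succ', hT x hx]
        simp only [surv, mul_sub, Finset.sum_sub_distrib, Finset.mul_sum]
        rw [Finset.sum_comm]; ring
      rw [e]
      constructor
      · exact Finset.sum_nonneg fun y hy => mul_nonneg (hP0 x hx y) (ih y hy).1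
      · calc _ ≤ ∑ y ∈ V, P x y * (ρ ^ n * T y) :=
            Finset.sum_le_sum fun y hy => mul_le_mul_of_nonneg_left (ih y hy).2 (hP0 x hx y)
        _ = ρ ^ n * ∑ y ∈ V, P x y * T y := by
            rw [Finset.mul_sum]; refine Finset.sum_congr rfl fun l _ => ?_; ring
        _ ≤ ρ ^ n * (ρ * T x) := mul_le_mul_of_nonneg_left (hQT x hx) (pow_nonneg hρ0 n)
        _ = ρ ^ (n + 1) * T x := by ring
  have lim1 : Tendsto (fun n => ∑ k ∈ range n, surv P V k x) atTop (𝓝 (T x)) := by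
    have h0 : Tendsto (fun n => T x - ∑ k ∈ range n, surv P V k x) atTop (𝓝 0) := by
      refine squeeze_zero (fun n => (hD n x hx).1) (fun n => (hD n x hx).2) ?_
      simpa using (tendsto_pow_atTop_nhds_zero_of_lt_one hρ0 hρ1).mul_const (T x)
    simpa using (tendsto_const_nhds (x := T x)).sub h0
  have lim2 : Tendsto (fun n : ℕ => (n : ℝ) * surv P V n x) atTop (𝓝 0) := by
    refine squeeze_zero (g := fun n : ℕ => (n * ρ ^ n) * T x)
      (fun n => mul_nonneg (Nat.cast_nonneg n) (hs0 n x hx)) (fun n => ?_) ?_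
    · rw [mul_assoc]; exact mul_le_mul_of_nonneg_left (hs n x hx) (Nat.cast_nonneg n)
    · simpa using (tendsto_self_mul_const_pow_of_lt_one hρ0 hρ1).mul_const (T x)
  set f : List S → ℝ := fun l =>
    if FirstHit (∅ : Set S) {b} l then (l.length : ℝ) * pathProb P x l else 0 with hf
  have hf0 : ∀ l, 0 ≤ f l := by
    intro l
    simp only [hf]
    split_ifs with h
    · exact mul_nonneg (Nat.cast_nonneg _) (pathProb_nonneg_of_firstHit P V b hP0 hPz l x hx h)
    · exact le_rfl
  have hfz : ∀ l, (¬ ∀ y ∈ l, y ∈ insert b V) → f l = 0 := by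
    intro l hl
    simp only [hf]
    split_ifs with h
    · rw [pathProb_eq_zero_of_firstHit P V b hPz l x hx h hl, mul_zero]
    · rfl
  have limA : Tendsto (fun n => ∑ l ∈ listsUpTo (insert b V) n, f l) atTop (𝓝 (T x)) := by
    have : (fun n => ∑ l ∈ listsUpTo (insert b V) n, f l) =
        fun n : ℕ => ∑ k ∈ range n, surv P V k x - n * surv P V n x :=
      funext fun n => hA n x hx
    rw [this]
    simpa using lim1.sub lim2
  have hmono : Monotone (fun n => ∑ l ∈ listsUpTo (insert b V) n, f l) := by
    intro n m hnm
    refine Finset.sum_le_sum_of_subset_of_nonneg ?_ fun l _ _ => hf0 l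
    intro l hl
    rw [mem_listsUpTo] at hl ⊢
    exact ⟨hl.1.trans hnm, hl.2⟩
  have hsum : HasSum f (T x) := by
    refine hasSum_of_isLUB_of_nonneg _ hf0 ⟨?_, ?_⟩
    · rintro _ ⟨F, rfl⟩
      refine le_trans ?_ (hmono.ge_of_tendsto limA (F.sup List.length))
      simp only
      rw [← Finset.sum_filter_add_sum_filter_not F (fun l => ∀ y ∈ l, y ∈ insert b V) f]
      rw [Finset.sum_eq_zero (s := F.filter fun l => ¬ ∀ y ∈ l, y ∈ insert b V)
        (fun l hl => hfz l (Finset.mem_filter.1 hl).2), add_zero]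
      refine Finset.sum_le_sum_of_subset_of_nonneg ?_ fun l _ _ => hf0 l
      intro l hl
      rw [Finset.mem_filter] at hl
      rw [mem_listsUpTo]
      exact ⟨Finset.le_sup (f := List.length) hl.1, hl.2⟩
    · intro u hu
      refine le_of_tendsto' limA fun n => hu ⟨_, rfl⟩
  exact hsum.tsum_eq

end hit

/-- The `k`-th point of `Γ_N`. -/
def xk (N k : ℕ) : ℝ := -1 + 2 * k / N

/-- up rate -/
def upR (N : ℕ) (β h : ℝ) (k : ℕ) : ℝ :=
  Real.exp (-β * N * max (Em h (xk N (k + 1)) - Em h (xk N k)) 0) * ((1 - xk N k) / 2)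

/-- down rate -/
def dnR (N : ℕ) (β h : ℝ) (k : ℕ) : ℝ :=
  Real.exp (-β * N * max (Em h (xk N k - 2 / N) - Em h (xk N k)) 0) * ((1 + xk N k) / 2)

/-- reversible weights -/
def Qw (N : ℕ) (β h : ℝ) (k : ℕ) : ℝ := (N.choose k : ℝ) * Real.exp (-β * N * Em h (xk N k))

/-- cumulative weights -/
def Sw (N : ℕ) (β h : ℝ) (k : ℕ) : ℝ := ∑ j ∈ range (k + 1), Qw N β h j

lemma xk_succ (N k : ℕ) : xk N (k + 1) = xk N k + 2 / N := by
  unfold xk; push_cast; ring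

lemma xk_inj {N : ℕ} (hN : 0 < N) : Function.Injective (xk N) := by
  intro a b hab
  have hN' : (0 : ℝ) < N := by exact_mod_cast hN
  unfold xk at hab
  have : (2 * a / N : ℝ) = 2 * b / N := by linarith
  rw [div_left_inj' hN'.ne'] at this
  exact_mod_cast (by linarith : (a : ℝ) = b)

lemma xk_le_one {N k : ℕ} (hk : k ≤ N) : xk N k ≤ 1 := by
  have hk' : (k : ℝ) ≤ N := by exact_mod_cast hk
  have : 2 * (k : ℝ) / N ≤ 2 := by
    rw [mul_div_assoc]
    have := div_le_one_of_le₀ hk' (Nat.cast_nonneg N)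
    linarith
  unfold xk; linarith

lemma neg_one_le_xk (N k : ℕ) : -1 ≤ xk N k := by
  have : 0 ≤ 2 * (k : ℝ) / N := by positivity
  unfold xk; linarith

lemma xk_lt_one {N k : ℕ} (hk : k < N) : xk N k < 1 := by
  have hk' : (k : ℝ) < N := by exact_mod_cast hk
  have hN : (0 : ℝ) < N := lt_of_le_of_lt (Nat.cast_nonneg k) hk'
  have : 2 * (k : ℝ) / N < 2 := by
    rw [div_lt_iff₀ hN]; linarith
  unfold xk; linarith

lemma upR_nonneg (N : ℕ) (β h : ℝ) {k : ℕ} (hk : k ≤ N) : 0 ≤ upR N β h k := by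
  have := xk_le_one hk
  exact mul_nonneg (Real.exp_nonneg _) (by linarith)

lemma upR_pos (N : ℕ) (β h : ℝ) {k : ℕ} (hk : k < N) : 0 < upR N β h k := by
  have := xk_lt_one hk
  exact mul_pos (Real.exp_pos _) (by linarith)

lemma dnR_nonneg (N : ℕ) (β h : ℝ) (k : ℕ) : 0 ≤ dnR N β h k := by
  have := neg_one_le_xk N k
  exact mul_nonneg (Real.exp_nonneg _) (by linarith)

lemma dnR_zero (N : ℕ) (β h : ℝ) : dnR N β h 0 = 0 := by
  simp [dnR, xk]

lemma Qw_pos (N : ℕ) (β h : ℝ) {k : ℕ} (hk : k ≤ N) : 0 < Qw N β h k :=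
  mul_pos (by exact_mod_cast Nat.choose_pos hk) (Real.exp_pos _)

lemma Qw_nonneg (N : ℕ) (β h : ℝ) (k : ℕ) : 0 ≤ Qw N β h k :=
  mul_nonneg (Nat.cast_nonneg _) (Real.exp_nonneg _)

lemma Sw_nonneg (N : ℕ) (β h : ℝ) (k : ℕ) : 0 ≤ Sw N β h k :=
  Finset.sum_nonneg fun _ _ => Qw_nonneg _ _ _ _

lemma exp_aux (β N A B : ℝ) :
    Real.exp (-β * N * A) * Real.exp (-β * N * max (B - A) 0) =
      Real.exp (-β * N * B) * Real.exp (-β * N * max (A - B) 0) := by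
  rw [← Real.exp_add, ← Real.exp_add]
  congr 1
  rcases le_total A B with h | h
  · rw [max_eq_left (by linarith), max_eq_right (by linarith)]; ring
  · rw [max_eq_right (by linarith), max_eq_left (by linarith)]; ring

lemma balance (N : ℕ) (β h : ℝ) {k : ℕ} (hk : k < N) :
    Qw N β h k * upR N β h k = Qw N β h (k + 1) * dnR N β h (k + 1) := by
  have hN : (0 : ℝ) < N := by exact_mod_cast lt_of_le_of_lt (Nat.zero_le k) hk
  have e1 : xk N (k + 1) - 2 / N = xk N k := by rw [xk_succ]; ring
  have e2 : (N.choose k : ℝ) * ((1 - xk N k) / 2) =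
      (N.choose (k + 1) : ℝ) * ((1 + xk N (k + 1)) / 2) := by
    have h1 := Nat.choose_succ_right_eq N k
    have h2 : ((N.choose (k + 1) : ℝ)) * (k + 1) = N.choose k * (N - k) := by
      rw [← Nat.cast_sub hk.le]; exact_mod_cast h1
    have a1 : (1 - xk N k) / 2 = (N - k) / N := by unfold xk; field_simp; ring
    have a2 : (1 + xk N (k + 1)) / 2 = (k + 1) / N := by unfold xk; push_cast; field_simp; ring
    rw [a1, a2, mul_div_assoc', mul_div_assoc', h2]
  unfold Qw upR dnR
  rw [e1]
  have := exp_aux β N (Em h (xk N k)) (Em h (xk N (k + 1)))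
  linear_combination (N.choose k : ℝ) * ((1 - xk N k) / 2) * this +
    Real.exp (-β * N * Em h (xk N (k + 1))) *
      Real.exp (-β * N * max (Em h (xk N k) - Em h (xk N (k + 1))) 0) * e2

lemma rCW_xk (N : ℕ) (hN : 0 < N) (β h : ℝ) (k j : ℕ) :
    rCW N β h (xk N k) (xk N j) =
      (if j = k + 1 then upR N β h k else 0) + (if j = k - 1 then dnR N β h k else 0)
      + (if j = k then 1 - upR N β h k - dnR N β h k else 0) := by
  have hinj := xk_inj hN
  have hN' : (0 : ℝ) < N := by exact_mod_cast hN
  have c1 : xk N j = xk N k + 2 / N ↔ j = k + 1 := by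
    rw [← xk_succ]; exact hinj.eq_iff
  have c2 : xk N j = xk N k - 2 / N ↔ j + 1 = k := by
    rw [eq_sub_iff_add_eq, ← xk_succ]; exact hinj.eq_iff
  have c3 : xk N j = xk N k ↔ j = k := hinj.eq_iff
  unfold rCW
  simp only [c1, c2, c3]
  by_cases h1 : j = k + 1
  · have : ¬ j = k - 1 := by omega
    have h3 : ¬ j = k := by omega
    rw [if_pos h1, if_pos h1, if_neg this, if_neg h3, h1]
    simp [upR]
  · rw [if_neg h1, if_neg h1]
    by_cases h2 : j + 1 = k
    · have h3 : j = k - 1 := by omega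
      have h4 : ¬ j = k := by omega
      rw [if_pos h2, if_pos h3, if_neg h4]
      have : xk N j = xk N k - 2 / N := c2.2 h2
      rw [this]; simp [dnR]
    · rw [if_neg h2]
      by_cases h3 : j = k
      · rw [if_pos h3, if_pos h3]
        have e : 1 - Real.exp (-β * N * max (Em h (xk N k + 2 / N) - Em h (xk N k)) 0)
              * ((1 - xk N k) / 2)
            - Real.exp (-β * N * max (Em h (xk N k - 2 / N) - Em h (xk N k)) 0)
              * ((1 + xk N k) / 2) = 1 - upR N β h k - dnR N β h k := by
          unfold upR dnR; rw [xk_succ]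
        rw [e]
        by_cases h4 : j = k - 1
        · have : k = 0 := by omega
          rw [if_pos h4, this, dnR_zero]; ring
        · rw [if_neg h4]; ring
      · have h4 : ¬ j = k - 1 := by omega
        rw [if_neg h3, if_neg h3, if_neg h4]; ring

lemma up_add_dn_le (N : ℕ) (β h : ℝ) (hβ : 0 < β) {k : ℕ} (hk : k ≤ N) :
    upR N β h k + dnR N β h k ≤ 1 := by
  have h1 := xk_le_one hk
  have h2 := neg_one_le_xk N k
  have hβN : 0 ≤ β * N := by positivity
  have e1 : ∀ z : ℝ, Real.exp (-β * N * max z 0) ≤ 1 := by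
    intro z
    rw [Real.exp_le_one_iff]
    have : 0 ≤ max z 0 := le_max_right _ _
    nlinarith [mul_nonneg hβN this]
  have a1 : upR N β h k ≤ 1 * ((1 - xk N k) / 2) :=
    mul_le_mul_of_nonneg_right (e1 _) (by linarith)
  have a2 : dnR N β h k ≤ 1 * ((1 + xk N k) / 2) :=
    mul_le_mul_of_nonneg_right (e1 _) (by linarith)
  linarith

/-- Exact formula for the mean hitting time of the birth and death chain. -/
lemma hitTimeExp_formula (N : ℕ) (β h : ℝ) (hβ : 0 < β) {a b : ℕ} (hab : a < b) (hb : b ≤ N) :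
    hitTimeExp (rCW N β h) (xk N a) {xk N b} =
      ∑ i ∈ Ico a b, (Qw N β h i * upR N β h i)⁻¹ * Sw N β h i := by
  have hN : 0 < N := by omega
  have hinj := xk_inj hN
  set D : ℕ → ℝ := fun i => (Qw N β h i * upR N β h i)⁻¹ * Sw N β h i with hD
  set t : ℕ → ℝ := fun k => ∑ i ∈ Ico k b, D i with ht
  set T : ℝ → ℝ := Function.extend (xk N) t 0 with hTdef
  have hT : ∀ k, T (xk N k) = t k := fun k => hinj.extend_apply t 0 k
  have key : ∀ (u : ℕ → ℝ) (k : ℕ), k < b →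
      ∑ j ∈ range (b + 1), rCW N β h (xk N k) (xk N j) * u j =
        upR N β h k * u (k + 1) + dnR N β h k * u (k - 1)
          + (1 - upR N β h k - dnR N β h k) * u k := by
    intro u k hk
    simp only [rCW_xk N hN, add_mul, Finset.sum_add_distrib, ite_mul, zero_mul,
      Finset.sum_ite_eq', Finset.mem_range]
    rw [if_pos (by omega), if_pos (by omega), if_pos (by omega)]
  have sumV : ∀ g : ℝ → ℝ, ∑ y ∈ (range b).image (xk N), g y = ∑ j ∈ range b, g (xk N j) :=
    fun g => Finset.sum_image fun _ _ _ _ hxy => hinj hxy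
  have tb : t b = 0 := by simp [ht]
  have tsucc : ∀ k, k < b → t k = D k + t (k + 1) := by
    intro k hk
    simp only [ht]
    exact Finset.sum_eq_sum_Ico_succ_bot hk D
  have hDn : ∀ i, i < b → 0 ≤ D i := by
    intro i hi
    exact mul_nonneg (inv_nonneg.2 (mul_nonneg (Qw_nonneg _ _ _ _) (upR_nonneg _ _ _ (by omega))))
      (Sw_nonneg _ _ _ _)
  have hmain : ∀ k, k < b →
      t k = 1 + (upR N β h k * t (k + 1) + dnR N β h k * t (k - 1)
          + (1 - upR N β h k - dnR N β h k) * t k) := by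
    intro k hk
    have hu := upR_pos N β h (k := k) (by omega)
    have hq := Qw_pos N β h (k := k) (by omega)
    have hup : upR N β h k * D k = Sw N β h k / Qw N β h k := by
      simp only [hD]; field_simp
    have h1 := tsucc k hk
    cases k with
    | zero =>
      rw [dnR_zero]
      have : Sw N β h 0 / Qw N β h 0 = 1 := by
        simp only [Sw, zero_add, Finset.sum_range_one]; exact div_self hq.ne'
      rw [this] at hup
      linear_combination upR N β h 0 * h1 + hup
    | succ k =>
      have h2 := tsucc k (by omega)
      have hb2 := balance N β h (k := k) (by omega)
      have hqk := Qw_pos N β h (k := k) (by omega)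
      have huk := upR_pos N β h (k := k) (by omega)
      have hdn : dnR N β h (k + 1) * D k = Sw N β h k / Qw N β h (k + 1) := by
        simp only [hD]
        rw [hb2]
        have : dnR N β h (k + 1) ≠ 0 := by
          intro h0; rw [h0, mul_zero] at hb2; exact (mul_pos hqk huk).ne' hb2
        field_simp
      have hS : Sw N β h (k + 1) = Sw N β h k + Qw N β h (k + 1) := by
        unfold Sw; rw [Finset.sum_range_succ]
      rw [hS, add_div, div_self hq.ne'] at hup
      simp only [Nat.add_sub_cancel]
      linear_combination upR N β h (k + 1) * h1 + hup - dnR N β h (k + 1) * h2 - hdn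
  rw [hitTimeExp_eq (rCW N β h) ((range b).image (xk N)) (xk N b) ?_ ?_ ?_ ?_ T ?_ ?_ _ ?_, hT a]
  · intro hmem
    obtain ⟨j, hj, hj'⟩ := Finset.mem_image.1 hmem
    have := hinj hj'
    simp at hj; omega
  · intro x hx y
    obtain ⟨k, hk, rfl⟩ := Finset.mem_image.1 hx
    have hk' : k < b := by simpa using hk
    have h1 := up_add_dn_le N β h hβ (k := k) (by omega)
    have h2 := xk_le_one (N := N) (k := k) (by omega)
    have h3 := neg_one_le_xk N k
    unfold rCW
    split_ifs
    · exact mul_nonneg (Real.exp_nonneg _) (by linarith)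
    · exact mul_nonneg (Real.exp_nonneg _) (by linarith)
    · unfold upR dnR at h1
      rw [xk_succ] at h1; linarith
    · exact le_rfl
  · intro x hx y hyb hyV
    obtain ⟨k, hk, rfl⟩ := Finset.mem_image.1 hx
    have hk' : k < b := by simpa using hk
    have hy : ∀ j, j ≤ b → y ≠ xk N j := by
      intro j hj h
      rcases hj.eq_or_lt with rfl | hj
      · exact hyb h
      · exact hyV (Finset.mem_image.2 ⟨j, by simpa using hj, h.symm⟩)
    unfold rCW
    rw [if_neg (by rw [← xk_succ]; exact hy _ (by omega)), ]
    rw [if_neg (c := y = xk N k) (hy k hk'.le)]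
    split_ifs with h2
    · cases k with
      | zero => simp [xk]
      | succ k => exact absurd (by rw [h2, xk_succ]; ring) (hy k (by omega))
    · rfl
  · intro x hx
    obtain ⟨k, hk, rfl⟩ := Finset.mem_image.1 hx
    have hk' : k < b := by simpa using hk
    have := key (fun _ => 1) k hk'
    simp only [mul_one] at this
    rw [Finset.sum_range_succ] at this
    rw [sumV]; linarith
  · intro x hx
    obtain ⟨k, hk, rfl⟩ := Finset.mem_image.1 hx
    rw [hT]
    refine Finset.sum_nonneg fun i hi => hDn i (Finset.mem_Ico.1 hi).2
  · intro x hx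
    obtain ⟨k, hk, rfl⟩ := Finset.mem_image.1 hx
    have hk' : k < b := by simpa using hk
    have h1 := key t k hk'
    rw [Finset.sum_range_succ, tb, mul_zero, add_zero] at h1
    rw [sumV]
    simp only [hT]
    rw [h1]; exact hmain k hk'
  · exact Finset.mem_image.2 ⟨a, by simpa using hab, rfl⟩

lemma spin_sum {N : ℕ} (σ : Conf N) :
    ∑ i, spin (σ i) = 2 * ((univ.filter fun i => σ i = true).card : ℝ) - N := by
  have : ∀ i, spin (σ i) = 2 * (if σ i = true then (1 : ℝ) else 0) - 1 := by
    intro i; unfold spin; split_ifs <;> norm_num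
  simp only [this, Finset.sum_sub_distrib, ← Finset.mul_sum]
  simp

lemma mem_Gamma_iff {N : ℕ} (hN : 0 < N) (y : ℝ) :
    y ∈ Gamma N ↔ ∃ k ≤ N, y = xk N k := by
  have hN' : (0 : ℝ) < N := by exact_mod_cast hN
  have hm : ∀ σ : Conf N, mag σ = xk N (univ.filter fun i => σ i = true).card := by
    intro σ
    unfold mag xk; rw [spin_sum]; field_simp; ring
  constructor
  · rintro ⟨σ, rfl⟩
    refine ⟨(univ.filter fun i => σ i = true).card, ?_, hm σ⟩
    simpa using Finset.card_le_univ (univ.filter fun i => σ i = true)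
  · rintro ⟨k, hk, rfl⟩
    refine ⟨fun i => decide (i.val < k), ?_⟩
    simp only
    rw [hm]
    congr 1
    simp only [decide_eq_true_eq]
    rw [Fin.card_filter_val_lt]
    exact min_eq_right hk

lemma closest_bound {N : ℕ} (hN : 0 < N) {m y : ℝ} (hm1 : -1 < m) (hm2 : m < 1)
    (hy : ClosestIn (Gamma N) m y) : |m - y| ≤ 2 / N := by
  have hN' : (0 : ℝ) < N := by exact_mod_cast hN
  set z : ℝ := N * (1 + m) / 2 with hz
  have hz0 : 0 ≤ z := by
    have : 0 ≤ 1 + m := by linarith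
    positivity
  have h1 := Nat.floor_le hz0
  have h2 := Nat.lt_floor_add_one z
  have hzN : z ≤ N := by rw [hz]; nlinarith
  have hk : ⌊z⌋₊ ≤ N := by
    have := Nat.floor_le_floor hzN
    simpa using this
  have := hy.2 (xk N ⌊z⌋₊) ((mem_Gamma_iff hN _).2 ⟨_, hk, rfl⟩)
  refine this.trans ?_
  have e : m - xk N ⌊z⌋₊ = (z - ⌊z⌋₊) * (2 / N) := by
    unfold xk; rw [hz]; field_simp; ring
  rw [e, abs_of_nonneg (mul_nonneg (by linarith) (by positivity))]
  have : 0 ≤ 2 / (N : ℝ) := by positivity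
  nlinarith

/-- rescaled lattice points -/
def tauk (m : ℝ) (N k : ℕ) : ℝ := Real.sqrt N * (xk N k - m)

lemma tauk_succ (m : ℝ) {N : ℕ} (hN : 0 < N) (k : ℕ) :
    tauk m N (k + 1) = tauk m N k + 2 / Real.sqrt N := by
  have hN' : (0 : ℝ) < N := by exact_mod_cast hN
  have hs : 0 < Real.sqrt N := Real.sqrt_pos.2 hN'
  have hss : Real.sqrt N * Real.sqrt N = N := Real.mul_self_sqrt hN'.le
  unfold tauk; rw [xk_succ]
  have : Real.sqrt N * (2 / N) = 2 / Real.sqrt N := by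
    rw [mul_div_assoc', div_eq_div_iff hN'.ne' hs.ne']; linear_combination 2 * hss
  rw [← this]; ring

lemma tauk_mono (m : ℝ) (N : ℕ) : Monotone (tauk m N) := by
  intro a b hab
  unfold tauk xk
  have : (a : ℝ) ≤ b := by exact_mod_cast hab
  gcongr

lemma tauk_sq (m : ℝ) (N k : ℕ) : tauk m N k ^ 2 = N * (xk N k - m) ^ 2 := by
  unfold tauk; rw [mul_pow, Real.sq_sqrt (Nat.cast_nonneg N)]

/-- step function -/
def stepF (m : ℝ) (a : ℕ → ℕ → ℝ) (N : ℕ) (t : ℝ) : ℝ :=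
  ∑ k ∈ range (N + 1), (Set.Ico (tauk m N k) (tauk m N (k + 1))).indicator (fun _ => a N k) t

lemma stepF_eq (m : ℝ) (a : ℕ → ℕ → ℝ) (N : ℕ) (t : ℝ) {k : ℕ} (hk : k ≤ N)
    (ht : t ∈ Set.Ico (tauk m N k) (tauk m N (k + 1))) : stepF m a N t = a N k := by
  unfold stepF
  rw [Finset.sum_eq_single k]
  · exact Set.indicator_of_mem ht _
  · intro j _ hj
    apply Set.indicator_of_notMem
    intro hj'
    rcases lt_or_gt_of_ne hj with h | h
    · have := tauk_mono m N (show j + 1 ≤ k from h)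
      exact absurd hj'.2 (not_lt.2 (this.trans ht.1))
    · have := tauk_mono m N (show k + 1 ≤ j from h)
      exact absurd ht.2 (not_lt.2 (this.trans hj'.1))
  · intro h; exact absurd (Finset.mem_range.2 (by omega)) h

lemma integral_stepF (m : ℝ) (a : ℕ → ℕ → ℝ) {N : ℕ} (hN : 0 < N) :
    ∫ t, stepF m a N t = 2 * ((Real.sqrt N)⁻¹ * ∑ k ∈ range (N + 1), a N k) := by
  unfold stepF
  rw [integral_finsetSum]
  · rw [Finset.mul_sum, Finset.mul_sum]
    refine Finset.sum_congr rfl fun k _ => ?_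
    rw [integral_indicator_const _ measurableSet_Ico, tauk_succ m hN]
    have : 0 ≤ 2 / Real.sqrt N := by positivity
    simp only [Measure.real, Real.volume_Ico, add_sub_cancel_left, smul_eq_mul,
      ENNReal.toReal_ofReal this]
    ring
  · intro k _
    refine (integrable_indicator_iff measurableSet_Ico).2 ?_
    exact integrableOn_const (by simp)

lemma laplace_sum (m : ℝ) (hm1 : -1 < m) (hm2 : m < 1) (a : ℕ → ℕ → ℝ) (K c : ℝ) (hK : 0 ≤ K)
    (hc : 0 < c) (G : ℝ → ℝ)
    (H1 : ∀ᶠ N : ℕ in atTop, ∀ k ≤ N, |a N k| ≤ K * Real.exp (-c * (N * (xk N k - m) ^ 2)))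
    (H2 : ∀ (t : ℝ) (k : ℕ → ℕ), (∀ᶠ N in atTop, k N ≤ N) →
      Tendsto (fun N : ℕ => Real.sqrt N * (xk N (k N) - m)) atTop (𝓝 t) →
      Tendsto (fun N => a N (k N)) atTop (𝓝 (G t))) :
    Tendsto (fun N : ℕ => (Real.sqrt N)⁻¹ * ∑ k ∈ range (N + 1), a N k) atTop
      (𝓝 (1 / 2 * ∫ t, G t)) := by
  have main : Tendsto (fun N : ℕ => ∫ t, stepF m a N t) atTop (𝓝 (∫ t, G t)) := by
    refine tendsto_integral_filter_of_dominated_convergence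
      (fun t => K * Real.exp (4 * c) * Real.exp (-(c / 2) * t ^ 2)) ?_ ?_ ?_ ?_
    · refine Eventually.of_forall fun N => ?_
      refine Measurable.aestronglyMeasurable ?_
      unfold stepF
      refine Finset.measurable_fun_sum _ fun k _ => ?_
      exact measurable_const.indicator measurableSet_Ico
    · filter_upwards [H1, eventually_ge_atTop 1] with N hN hN1
      refine Eventually.of_forall fun t => ?_
      rw [Real.norm_eq_abs]
      by_cases hex : ∃ k ≤ N, t ∈ Set.Ico (tauk m N k) (tauk m N (k + 1))
      · obtain ⟨k, hk, hkt⟩ := hex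
        rw [stepF_eq m a N t hk hkt]
        refine (hN k hk).trans ?_
        rw [← tauk_sq, mul_assoc, ← Real.exp_add]
        refine mul_le_mul_of_nonneg_left (Real.exp_le_exp.2 ?_) hK
        have h1 := hkt.1
        have h2 := hkt.2
        rw [tauk_succ m hN1] at h2
        have hs : 1 ≤ Real.sqrt N := by
          rw [Real.one_le_sqrt]; exact_mod_cast hN1
        have h3 : 2 / Real.sqrt N ≤ 2 := by
          rw [div_le_iff₀ (by linarith)]; linarith
        have h4 : t ^ 2 ≤ 2 * tauk m N k ^ 2 + 8 := by nlinarith [sq_nonneg (t - 2 * tauk m N k)]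
        nlinarith
      · have : stepF m a N t = 0 := by
          unfold stepF
          refine Finset.sum_eq_zero fun k hk => Set.indicator_of_notMem ?_ _
          intro h; exact hex ⟨k, by simpa [Nat.lt_succ_iff] using hk, h⟩
        rw [this, abs_zero]; positivity
    · exact (integrable_exp_neg_mul_sq (by positivity)).const_mul _
    · refine Eventually.of_forall fun t => ?_
      set z : ℕ → ℝ := fun N => (N * (1 + m) + Real.sqrt N * t) / 2 with hz
      have hsq : Tendsto (fun N : ℕ => Real.sqrt N) atTop atTop :=
        Real.tendsto_sqrt_atTop.comp tendsto_natCast_atTop_atTop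
      have hinv : Tendsto (fun N : ℕ => t / Real.sqrt N) atTop (𝓝 0) :=
        tendsto_const_nhds.div_atTop hsq
      have e1 : ∀ᶠ N : ℕ in atTop, t / Real.sqrt N < 1 - m :=
        hinv.eventually_lt_const (by linarith)
      have e2 : ∀ᶠ N : ℕ in atTop, -(1 + m) < t / Real.sqrt N :=
        hinv.eventually_const_lt (by linarith)
      have hk : ∀ᶠ N : ℕ in atTop, ⌊z N⌋₊ ≤ N ∧
          t ∈ Set.Ico (tauk m N ⌊z N⌋₊) (tauk m N (⌊z N⌋₊ + 1)) := by
        filter_upwards [e1, e2, eventually_ge_atTop 1] with N h1 h2 hN1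
        have hN' : (0 : ℝ) < N := by exact_mod_cast hN1
        have hs : 0 < Real.sqrt N := Real.sqrt_pos.2 hN'
        have hss : Real.sqrt N * Real.sqrt N = N := Real.mul_self_sqrt hN'.le
        rw [div_lt_iff₀ hs] at h1
        rw [lt_div_iff₀ hs] at h2
        have hz0 : 0 ≤ z N := by simp only [hz]; nlinarith
        have hzN : z N ≤ N := by simp only [hz]; nlinarith
        have hfl := Nat.floor_le hz0
        have hfl2 := Nat.lt_floor_add_one (z N)
        have et : ∀ k : ℕ, tauk m N k = (2 * k - N * (1 + m)) / Real.sqrt N := by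
          intro k
          rw [eq_div_iff hs.ne']
          unfold tauk xk
          have : (N : ℝ) * (2 * k / N) = 2 * k := by field_simp
          linear_combination (-1 + 2 * (k : ℝ) / N - m) * hss + this
        refine ⟨by simpa using Nat.floor_le_floor hzN, ?_, ?_⟩
        · rw [et, div_le_iff₀ hs]
          simp only [hz] at hfl; simp only [hz]; linarith
        · rw [et, lt_div_iff₀ hs]
          push_cast
          simp only [hz] at hfl2; simp only [hz]; linarith
      have hkt : Tendsto (fun N : ℕ => Real.sqrt N * (xk N ⌊z N⌋₊ - m)) atTop (𝓝 t) := by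
        have h2 : Tendsto (fun N : ℕ => t - 2 / Real.sqrt N) atTop (𝓝 t) := by
          simpa using tendsto_const_nhds.sub (tendsto_const_nhds.div_atTop hsq)
        refine tendsto_of_tendsto_of_tendsto_of_le_of_le' h2 tendsto_const_nhds ?_ ?_
        · filter_upwards [hk, eventually_ge_atTop 1] with N h hN1
          have := h.2.2
          rw [tauk_succ m hN1] at this
          unfold tauk at this; linarith
        · filter_upwards [hk] with N h
          exact h.2.1
      refine (H2 t (fun N => ⌊z N⌋₊) (hk.mono fun N h => h.1) hkt).congr' ?_
      filter_upwards [hk] with N h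
      exact (stepF_eq m a N t h.1 h.2).symm
  refine (main.const_mul (1 / 2)).congr' ?_
  filter_upwards [eventually_ge_atTop 1] with N hN
  rw [integral_stepF m a hN]; ring

/-- The binomial coefficient normalised by its exponential rate. -/
def Cn (N k : ℕ) : ℝ := (N.choose k : ℝ) * Real.exp (N * Ient (xk N k))

lemma Qw_eq (N : ℕ) (β h : ℝ) (hβ : β ≠ 0) (k : ℕ) :
    Qw N β h k = Cn N k * Real.exp (-β * N * fE β h (xk N k)) := by
  unfold Qw Cn
  rw [mul_assoc (N.choose k : ℝ), ← Real.exp_add]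
  congr 2
  unfold fE
  field_simp
  ring

lemma exp_mul_log_div (k : ℕ) (M : ℝ) (hM : 0 < M) :
    Real.exp (k * Real.log (k / M)) = (k / M) ^ k := by
  rcases Nat.eq_zero_or_pos k with rfl | hk
  · simp
  · have : (0 : ℝ) < k := by exact_mod_cast hk
    rw [Real.exp_nat_mul, Real.exp_log (by positivity)]

lemma half_one_add_xk {N k : ℕ} (hN : 0 < N) : (1 + xk N k) / 2 = k / N := by
  have hN' : (0 : ℝ) < N := by exact_mod_cast hN
  unfold xk; field_simp; ring

lemma half_one_sub_xk {N k : ℕ} (hN : 0 < N) (hk : k ≤ N) :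
    (1 - xk N k) / 2 = (N - k : ℕ) / N := by
  have hN' : (0 : ℝ) < N := by exact_mod_cast hN
  rw [Nat.cast_sub hk]
  unfold xk; field_simp; ring

lemma exp_Ient {N k : ℕ} (hN : 0 < N) (hk : k ≤ N) :
    Real.exp (N * Ient (xk N k)) = (k / N) ^ k * (((N - k : ℕ) : ℝ) / N) ^ (N - k) := by
  have hN' : (0 : ℝ) < N := by exact_mod_cast hN
  unfold Ient
  rw [half_one_add_xk hN, half_one_sub_xk hN hk, ← exp_mul_log_div k N hN',
    ← exp_mul_log_div (N - k) N hN', ← Real.exp_add]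
  congr 1
  field_simp
  ring

lemma Cn_le_one {N k : ℕ} (hN : 0 < N) (hk : k ≤ N) : Cn N k ≤ 1 := by
  have hN' : (0 : ℝ) < N := by exact_mod_cast hN
  unfold Cn
  rw [exp_Ient hN hk]
  have h1 := add_pow ((k : ℝ) / N) (((N - k : ℕ) : ℝ) / N) N
  have h2 : (k : ℝ) / N + ((N - k : ℕ) : ℝ) / N = 1 := by
    rw [Nat.cast_sub hk]; field_simp; ring
  rw [h2, one_pow] at h1
  rw [h1]
  have := Finset.single_le_sum (s := range (N + 1))
    (f := fun j => ((k : ℝ) / N) ^ j * (((N - k : ℕ) : ℝ) / N) ^ (N - j) * (N.choose j : ℝ))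
    (fun j _ => by positivity) (Finset.mem_range.2 (Nat.lt_succ_of_le hk))
  refine le_trans (le_of_eq ?_) this
  ring

lemma Cn_stirling {N k : ℕ} (hk : 0 < k) (hkN : k < N) :
    Real.sqrt N * Cn N k = Stirling.stirlingSeq N /
      (Stirling.stirlingSeq k * Stirling.stirlingSeq (N - k)) *
        (Real.sqrt 2 / Real.sqrt (1 - xk N k ^ 2)) := by
  obtain ⟨j, rfl⟩ := Nat.exists_eq_add_of_lt hkN
  have hN : 0 < k + j + 1 := by omega
  have e : k + j + 1 - k = j + 1 := by omega
  have hk1 : (0 : ℝ) < k := by exact_mod_cast hk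
  have hj1 : (0 : ℝ) < (j + 1 : ℕ) := by positivity
  unfold Cn
  rw [exp_Ient hN (by omega), e]
  have hch : ((k + j + 1).choose k : ℝ) = (k + j + 1).factorial / (k.factorial * (j + 1).factorial) := by
    rw [Nat.cast_choose ℝ (by omega : k ≤ k + j + 1), e]
  have hx : 1 - xk (k + j + 1) k ^ 2 = 4 * k * (j + 1 : ℕ) / (k + j + 1 : ℕ) ^ 2 := by
    unfold xk; push_cast; field_simp; ring
  rw [hch, hx]
  unfold Stirling.stirlingSeq
  set J : ℕ := j + 1 with hJ
  have hNJ : k + j + 1 = k + J := by omega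
  rw [hNJ]
  rw [hNJ] at hN
  set n : ℕ := k + J with hn
  have hn1 : (0 : ℝ) < n := by exact_mod_cast hN
  have sn : Real.sqrt n * Real.sqrt n = n := Real.mul_self_sqrt hn1.le
  have s1 : Real.sqrt (2 * n) = Real.sqrt 2 * Real.sqrt n := Real.sqrt_mul (by norm_num) _
  have s2 : Real.sqrt (2 * k) = Real.sqrt 2 * Real.sqrt k := Real.sqrt_mul (by norm_num) _
  have s3 : Real.sqrt (2 * J) = Real.sqrt 2 * Real.sqrt J := Real.sqrt_mul (by norm_num) _
  have s4 : Real.sqrt (4 * k * J / n ^ 2) = 2 * Real.sqrt k * Real.sqrt J / n := by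
    rw [Real.sqrt_div (by positivity), Real.sqrt_sq hn1.le, mul_assoc,
      Real.sqrt_mul (by norm_num), Real.sqrt_mul hk1.le]
    have : Real.sqrt 4 = 2 := by
      rw [show (4 : ℝ) = 2 ^ 2 by norm_num, Real.sqrt_sq (by norm_num)]
    rw [this]; ring
  have s5 : Real.sqrt 2 * Real.sqrt 2 = 2 := Real.mul_self_sqrt (by norm_num)
  have p1 : 0 < Real.sqrt 2 := by positivity
  have p2 : 0 < Real.sqrt n := by positivity
  have p3 : 0 < Real.sqrt k := by positivity
  have p4 : 0 < Real.sqrt J := by positivity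
  rw [s1, s2, s3, s4]
  have hpow : ((n : ℝ)) ^ n = (n : ℝ) ^ k * (n : ℝ) ^ J := by rw [← pow_add]
  have hpe : (Real.exp 1) ^ n = (Real.exp 1) ^ k * (Real.exp 1) ^ J := by rw [← pow_add]
  have hkp : (0 : ℝ) < (k : ℝ) ^ k := by positivity
  have hJp : (0 : ℝ) < (J : ℝ) ^ J := by positivity
  have f1 : (0 : ℝ) < k.factorial := by exact_mod_cast Nat.factorial_pos k
  have f2 : (0 : ℝ) < J.factorial := by exact_mod_cast Nat.factorial_pos J
  simp only [div_pow]
  rw [hpow, hpe]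
  set E1 := Real.exp 1 ^ k with hE1
  set E2 := Real.exp 1 ^ J with hE2
  have q1 : 0 < E1 := by positivity
  have q2 : 0 < E2 := by positivity
  have q3 : (0 : ℝ) < (n : ℝ) ^ k := by positivity
  have q4 : (0 : ℝ) < (n : ℝ) ^ J := by positivity
  generalize (n : ℝ) ^ k = A1 at *
  generalize (n : ℝ) ^ J = A2 at *
  generalize (k : ℝ) ^ k = A3 at *
  generalize (J : ℝ) ^ J = A4 at *
  generalize Real.sqrt n = r1 at *
  generalize Real.sqrt k = r2 at *
  generalize Real.sqrt J = r3 at *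
  generalize Real.sqrt 2 = r4 at *
  clear_value E1 E2
  rw [← sn]
  field_simp
  linear_combination -s5

lemma stirlingSeq_le_one' {n : ℕ} (hn : 0 < n) :
    Stirling.stirlingSeq n ≤ Stirling.stirlingSeq 1 := by
  obtain ⟨k, rfl⟩ := Nat.exists_eq_succ_of_ne_zero hn.ne'
  exact Stirling.stirlingSeq'_antitone (Nat.zero_le k)

lemma one_sub_xk_sq_pos {N k : ℕ} (hk : 0 < k) (hkN : k < N) : 0 < 1 - xk N k ^ 2 := by
  have h1 := xk_lt_one hkN
  have h2 : -1 < xk N k := by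
    have : (0 : ℝ) < k := by exact_mod_cast hk
    have : (0 : ℝ) < N := by exact_mod_cast (hk.trans hkN)
    unfold xk
    have : 0 < 2 * (k : ℝ) / N := by positivity
    linarith
  nlinarith

lemma Cn_lower : ∃ c : ℝ, 0 < c ∧ ∀ N k : ℕ, 0 < k → k < N → c ≤ Real.sqrt N * Cn N k := by
  have s1 : 0 < Stirling.stirlingSeq 1 := Stirling.stirlingSeq'_pos 0
  refine ⟨Real.sqrt Real.pi / (Stirling.stirlingSeq 1 * Stirling.stirlingSeq 1) *
    (Real.sqrt 2 / 1), by positivity, fun N k hk hkN => ?_⟩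
  rw [Cn_stirling hk hkN]
  have hp := one_sub_xk_sq_pos hk hkN
  have a1 := Stirling.sqrt_pi_le_stirlingSeq (n := N) (by omega)
  have a2 := stirlingSeq_le_one' hk
  have a3 := stirlingSeq_le_one' (show 0 < N - k by omega)
  have pp : 0 < Real.sqrt Real.pi := by positivity
  have b1 := pp.trans_le (Stirling.sqrt_pi_le_stirlingSeq (n := k) (by omega))
  have b2 := pp.trans_le (Stirling.sqrt_pi_le_stirlingSeq (n := N - k) (by omega))
  have b3 : Real.sqrt (1 - xk N k ^ 2) ≤ 1 := by
    rw [Real.sqrt_le_one]; nlinarith [sq_nonneg (xk N k)]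
  have b4 := pp.le.trans a1
  have b5 : 0 ≤ Stirling.stirlingSeq N / (Stirling.stirlingSeq k * Stirling.stirlingSeq (N - k)) := by
    positivity
  gcongr

lemma Cn_upper (q : ℝ) (hq0 : 0 ≤ q) (hq : q < 1) : ∃ C : ℝ, 0 < C ∧ ∀ N k : ℕ, 0 < N → k ≤ N →
    |xk N k| ≤ q → Real.sqrt N * Cn N k ≤ C := by
  have s1 : 0 < Stirling.stirlingSeq 1 := Stirling.stirlingSeq'_pos 0
  have hq2 : 0 < 1 - q ^ 2 := by nlinarith
  have pp : 0 < Real.sqrt Real.pi := by positivity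
  refine ⟨Stirling.stirlingSeq 1 / (Real.sqrt Real.pi * Real.sqrt Real.pi) *
    (Real.sqrt 2 / Real.sqrt (1 - q ^ 2)), by positivity, fun N k hN hk hx => ?_⟩
  have hN' : (0 : ℝ) < N := by exact_mod_cast hN
  have hk0 : 0 < k := by
    rcases Nat.eq_zero_or_pos k with rfl | h
    · simp [xk] at hx; linarith
    · exact h
  have hkN : k < N := by
    rcases hk.eq_or_lt with rfl | h
    · have : xk k k = 1 := by unfold xk; field_simp; norm_num
      rw [this, abs_one] at hx; linarith
    · exact h
  rw [Cn_stirling hk0 hkN]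
  have a1 := stirlingSeq_le_one' hN
  have b1 := Stirling.sqrt_pi_le_stirlingSeq (n := k) (by omega)
  have b2 := Stirling.sqrt_pi_le_stirlingSeq (n := N - k) (by omega)
  have b3 : xk N k ^ 2 ≤ q ^ 2 := by rw [← sq_abs]; gcongr
  have : 0 ≤ Stirling.stirlingSeq N := pp.le.trans (Stirling.sqrt_pi_le_stirlingSeq (n := N) (by omega))
  have b4 : 0 ≤ Stirling.stirlingSeq k := pp.le.trans b1
  gcongr

lemma Cn_tendsto (m : ℝ) (hm1 : -1 < m) (hm2 : m < 1) (k : ℕ → ℕ)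
    (hkN : ∀ᶠ N in atTop, k N ≤ N)
    (hk : Tendsto (fun N => xk N (k N)) atTop (𝓝 m)) :
    Tendsto (fun N : ℕ => Real.sqrt N * Cn N (k N)) atTop
      (𝓝 (Real.sqrt Real.pi / (Real.sqrt Real.pi * Real.sqrt Real.pi) *
        (Real.sqrt 2 / Real.sqrt (1 - m ^ 2)))) := by
  have hS := Stirling.tendsto_stirlingSeq_sqrt_pi
  have pp : 0 < Real.sqrt Real.pi := by positivity
  have hm : 0 < 1 - m ^ 2 := by nlinarith
  have hNr : Tendsto (fun N : ℕ => (N : ℝ)) atTop atTop := tendsto_natCast_atTop_atTop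
  have k1 : Tendsto k atTop atTop := by
    have h1 : Tendsto (fun N : ℕ => (N : ℝ) * ((1 + xk N (k N)) / 2)) atTop atTop := by
      refine hNr.atTop_mul_pos (C := (1 + m) / 2) (by linarith) ?_
      exact (hk.const_add 1).div_const 2
    rw [← tendsto_natCast_atTop_iff (R := ℝ)]
    refine h1.congr' ?_
    filter_upwards [eventually_ge_atTop 1] with N hN
    have hN' : (0 : ℝ) < N := by exact_mod_cast hN
    rw [half_one_add_xk hN]; field_simp
  have k2 : Tendsto (fun N => N - k N) atTop atTop := by
    have h1 : Tendsto (fun N : ℕ => (N : ℝ) * ((1 - xk N (k N)) / 2)) atTop atTop := by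
      refine hNr.atTop_mul_pos (C := (1 - m) / 2) (by linarith) ?_
      exact (hk.const_sub 1).div_const 2
    rw [← tendsto_natCast_atTop_iff (R := ℝ)]
    refine h1.congr' ?_
    filter_upwards [eventually_ge_atTop 1, hkN] with N hN hkN
    have hN' : (0 : ℝ) < N := by exact_mod_cast hN
    rw [half_one_sub_xk hN hkN]; field_simp
  have lim : Tendsto (fun N => Stirling.stirlingSeq N /
      (Stirling.stirlingSeq (k N) * Stirling.stirlingSeq (N - k N)) *
        (Real.sqrt 2 / Real.sqrt (1 - xk N (k N) ^ 2))) atTop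
      (𝓝 (Real.sqrt Real.pi / (Real.sqrt Real.pi * Real.sqrt Real.pi) *
        (Real.sqrt 2 / Real.sqrt (1 - m ^ 2)))) := by
    refine Tendsto.mul (hS.div ((hS.comp k1).mul (hS.comp k2)) (by positivity)) ?_
    refine tendsto_const_nhds.div ?_ (by positivity)
    exact (Real.continuous_sqrt.tendsto _).comp ((hk.pow 2).const_sub 1)
  refine lim.congr' ?_
  filter_upwards [k1.eventually_gt_atTop 0, k2.eventually_gt_atTop 0] with N h1 h2
  exact (Cn_stirling h1 (by omega)).symm

/-- first derivative of `fE` -/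
def fp (β h m : ℝ) : ℝ :=
  -m - h + β⁻¹ * ((Real.log ((1 + m) / 2) - Real.log ((1 - m) / 2)) / 2)

/-- second derivative of `fE` -/
def fpp (β m : ℝ) : ℝ := -1 + β⁻¹ * (1 / (1 - m ^ 2))

lemma hasDerivAt_fE (β h m : ℝ) (h1 : -1 < m) (h2 : m < 1) :
    HasDerivAt (fE β h) (fp β h m) m := by
  have a1 : HasDerivAt (fun x : ℝ => (1 - x) / 2) (-1 / 2) m := by
    simpa using ((hasDerivAt_id m).const_sub 1).div_const 2
  have a2 : HasDerivAt (fun x : ℝ => (1 + x) / 2) (1 / 2) m := by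
    simpa using ((hasDerivAt_id m).const_add 1).div_const 2
  have b1 := (Real.hasDerivAt_mul_log (x := (1 - m) / 2) (by linarith)).comp m a1
  have b2 := (Real.hasDerivAt_mul_log (x := (1 + m) / 2) (by linarith)).comp m a2
  have c1 : HasDerivAt (Em h) (-m - h) m := by
    have e1 := (((hasDerivAt_id m).pow 2).neg.div_const 2).sub ((hasDerivAt_id m).const_mul h)
    refine (e1.congr_deriv ?_)
    simp
    ring
  have := c1.add ((b1.add b2).const_mul β⁻¹)
  refine this.congr_deriv ?_
  unfold fp; ring

lemma hasDerivAt_fp (β h m : ℝ) (h1 : -1 < m) (h2 : m < 1) :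
    HasDerivAt (fp β h) (fpp β m) m := by
  have a1 : HasDerivAt (fun x : ℝ => (1 - x) / 2) (-1 / 2) m := by
    simpa using ((hasDerivAt_id m).const_sub 1).div_const 2
  have a2 : HasDerivAt (fun x : ℝ => (1 + x) / 2) (1 / 2) m := by
    simpa using ((hasDerivAt_id m).const_add 1).div_const 2
  have b1 := a1.log (by linarith)
  have b2 := a2.log (by linarith)
  have c1 : HasDerivAt (fun x : ℝ => -x - h) (-1) m := (hasDerivAt_id m).neg.sub_const h
  have := c1.add (((b2.sub b1).div_const 2).const_mul β⁻¹)
  refine this.congr_deriv ?_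
  unfold fpp
  have e1 : 1 - m ≠ 0 := by linarith
  have e2 : 1 + m ≠ 0 := by linarith
  have e3 : 1 - m ^ 2 ≠ 0 := by nlinarith
  congr 2
  field_simp
  ring

lemma iteratedDeriv_fE (β h m : ℝ) (h1 : -1 < m) (h2 : m < 1) :
    iteratedDeriv 2 (fE β h) m = fpp β m := by
  rw [iteratedDeriv_succ, iteratedDeriv_one]
  have : deriv (fE β h) =ᶠ[𝓝 m] fp β h := by
    filter_upwards [Ioo_mem_nhds h1 h2] with x hx
    exact (hasDerivAt_fE β h x hx.1 hx.2).deriv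
  rw [this.deriv_eq]
  exact (hasDerivAt_fp β h m h1 h2).deriv

lemma continuous_fE (β h : ℝ) : Continuous (fE β h) := by
  have h1 := Real.continuous_mul_log
  have e1 : Continuous fun m : ℝ => (1 - m) / 2 * Real.log ((1 - m) / 2) :=
    h1.comp (g := fun x : ℝ => x * Real.log x) (f := fun m : ℝ => (1 - m) / 2) (by fun_prop)
  have e2 : Continuous fun m : ℝ => (1 + m) / 2 * Real.log ((1 + m) / 2) :=
    h1.comp (g := fun x : ℝ => x * Real.log x) (f := fun m : ℝ => (1 + m) / 2) (by fun_prop)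
  unfold fE Em Ient
  fun_prop

lemma fix_facts (β h m : ℝ) (hβ : 0 < β) (hm : m = Real.tanh (β * (m + h))) :
    -1 < m ∧ m < 1 ∧ fp β h m = 0 ∧ Real.exp (2 * β * (m + h)) = (1 + m) / (1 - m) := by
  have h1 : -1 < m := by rw [hm]; exact Real.neg_one_lt_tanh _
  have h2 : m < 1 := by rw [hm]; exact Real.tanh_lt_one _
  have h3 : Real.artanh m = β * (m + h) := by
    conv_lhs => rw [hm]
    exact Real.artanh_tanh _
  rw [Real.artanh_eq_half_log ⟨h1.le, h2.le⟩] at h3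
  refine ⟨h1, h2, ?_, ?_⟩
  · unfold fp
    rw [Real.log_div (by linarith) (by linarith)] at h3
    rw [Real.log_div (by linarith) (by norm_num), Real.log_div (by linarith) (by norm_num)]
    have e : (Real.log (1 + m) - Real.log 2 - (Real.log (1 - m) - Real.log 2)) / 2 = β * (m + h) := by
      rw [← h3]; ring
    rw [e]
    field_simp
    ring
  · have : 2 * β * (m + h) = Real.log ((1 + m) / (1 - m)) := by linarith
    rw [this, Real.exp_log]
    have : 0 < 1 - m := by linarith
    have : 0 < 1 + m := by linarith
    positivity

/-- everything we need to know about the double well -/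
structure WellFacts (β h a s b : ℝ) : Prop where
  a1 : -1 < a
  as : a < s
  sb : s < b
  b1 : b < 1
  s0 : s < 0
  sh : s + h < 0
  es : Real.exp (2 * β * (s + h)) = (1 + s) / (1 - s)
  fpa : fp β h a = 0
  fps : fp β h s = 0
  ka : 0 < fpp β a
  ks : fpp β s < 0
  anti1 : StrictAntiOn (fE β h) (Set.Icc (-1) a)
  mono : StrictMonoOn (fE β h) (Set.Icc a s)
  anti2 : StrictAntiOn (fE β h) (Set.Icc s b)

set_option maxHeartbeats 2000000 in
lemma wellFacts (β h a s b : ℝ) (hβ : 1 < β) (hh : 0 < h) (H : DoubleWell β h a s b) :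
    WellFacts β h a s b := by
  have hβ0 : 0 < β := by linarith
  obtain ⟨a1, a2, a3, a4⟩ := fix_facts β h a hβ0 H.fix_minus
  obtain ⟨s1, s2, s3, s4⟩ := fix_facts β h s hβ0 H.fix_star
  obtain ⟨b1, b2, b3, b4⟩ := fix_facts β h b hβ0 H.fix_plus
  have has := H.lt_star
  have hsb := H.star_lt
  obtain ⟨r, hr⟩ : ∃ r : ℝ, r = Real.sqrt (1 - β⁻¹) := ⟨_, rfl⟩
  have hinv : β⁻¹ < 1 := inv_lt_one_of_one_lt₀ hβ
  have hinv0 : 0 < β⁻¹ := inv_pos.2 hβ0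
  have hr2 : r ^ 2 = 1 - β⁻¹ := by rw [hr]; exact Real.sq_sqrt (by linarith)
  have hr0 : 0 < r := by rw [hr]; exact Real.sqrt_pos.2 (by linarith)
  have hr1 : r < 1 := by nlinarith
  have kpos : ∀ x, -1 < x → x < 1 → r ^ 2 < x ^ 2 → 0 < fpp β x := by
    intro x h1 h2 h3
    have hp : 0 < 1 - x ^ 2 := by nlinarith
    unfold fpp
    have : 1 < β⁻¹ * (1 / (1 - x ^ 2)) := by
      rw [mul_one_div, one_lt_div hp]; linarith
    linarith
  have kneg : ∀ x, -1 < x → x < 1 → x ^ 2 < r ^ 2 → fpp β x < 0 := by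
    intro x h1 h2 h3
    have hp : 0 < 1 - x ^ 2 := by nlinarith
    unfold fpp
    have : β⁻¹ * (1 / (1 - x ^ 2)) < 1 := by
      rw [mul_one_div, div_lt_one hp]; linarith
    linarith
  have kzero : ∀ x, -1 < x → x < 1 → fpp β x = 0 → x = r ∨ x = -r := by
    intro x h1 h2 h3
    apply sq_eq_sq_iff_eq_or_eq_neg.1
    rcases lt_trichotomy (x ^ 2) (r ^ 2) with h | h | h
    · exact absurd h3 (kneg x h1 h2 h).ne
    · exact h
    · exact absurd h3 (kpos x h1 h2 h).ne'
  have dfp : ∀ x, -1 < x → x < 1 → HasDerivAt (fp β h) (fpp β x) x := hasDerivAt_fp β h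
  have cfp : ∀ D : Set ℝ, D ⊆ Set.Ioo (-1) 1 → ContinuousOn (fp β h) D := by
    intro D hD x hx
    exact (dfp x (hD hx).1 (hD hx).2).continuousAt.continuousWithinAt
  obtain ⟨c, ⟨hc1, hc2⟩, hc⟩ := exists_hasDerivAt_eq_zero (f := fp β h) (f' := fpp β) has
    (cfp _ fun x hx => ⟨by linarith [hx.1], by linarith [hx.2]⟩) (by rw [a3, s3])
    (fun x hx => dfp x (by linarith [hx.1]) (by linarith [hx.2]))
  obtain ⟨d, ⟨hd1, hd2⟩, hd⟩ := exists_hasDerivAt_eq_zero (f := fp β h) (f' := fpp β) hsb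
    (cfp _ fun x hx => ⟨by linarith [hx.1], by linarith [hx.2]⟩) (by rw [b3, s3])
    (fun x hx => dfp x (by linarith [hx.1]) (by linarith [hx.2]))
  have hcr : c = -r := by
    rcases kzero c (by linarith) (by linarith) hc with h | h
    · rcases kzero d (by linarith) (by linarith) hd with h' | h' <;> linarith
    · exact h
  have hdr : d = r := by
    rcases kzero d (by linarith) (by linarith) hd with h | h
    · exact h
    · linarith
  rw [hcr] at hc1 hc2
  rw [hdr] at hd1 hd2
  have m1 : StrictMonoOn (fp β h) (Set.Ioc (-1) (-r)) := by
    refine strictMonoOn_of_deriv_pos (convex_Ioc _ _)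
      (cfp _ fun x hx => ⟨hx.1, by linarith [hx.2]⟩) fun x hx => ?_
    rw [interior_Ioc] at hx
    rw [(dfp x hx.1 (by linarith [hx.2])).deriv]
    exact kpos x hx.1 (by linarith [hx.2]) (by nlinarith [hx.2])
  have m2 : StrictAntiOn (fp β h) (Set.Icc (-r) r) := by
    refine strictAntiOn_of_deriv_neg (convex_Icc _ _)
      (cfp _ fun x hx => ⟨by linarith [hx.1], by linarith [hx.2]⟩) fun x hx => ?_
    rw [interior_Icc] at hx
    rw [(dfp x (by linarith [hx.1]) (by linarith [hx.2])).deriv]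
    exact kneg x (by linarith [hx.1]) (by linarith [hx.2]) (by nlinarith [hx.2, hx.1])
  have m3 : StrictMonoOn (fp β h) (Set.Ico r 1) := by
    refine strictMonoOn_of_deriv_pos (convex_Ico _ _)
      (cfp _ fun x hx => ⟨by linarith [hx.1], by linarith [hx.2]⟩) fun x hx => ?_
    rw [interior_Ico] at hx
    rw [(dfp x (by linarith [hx.1]) hx.2).deriv]
    exact kpos x (by linarith [hx.1]) hx.2 (by nlinarith [hx.1])
  have df : ∀ x, -1 < x → x < 1 → deriv (fE β h) x = fp β h x :=
    fun x h1 h2 => (hasDerivAt_fE β h x h1 h2).deriv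
  have cf := continuous_fE β h
  have hs0 : s < 0 := by
    by_contra hcon
    push Not at hcon
    have := m2.antitoneOn (a := 0) (b := s) ⟨by linarith, hr0.le⟩ ⟨by linarith, hd1.le⟩ hcon
    rw [s3] at this
    have e : fp β h 0 = -h := by unfold fp; simp
    rw [e] at this; linarith
  refine ⟨a1, has, hsb, b2, hs0, ?_, s4, a3, s3, kpos a a1 a2 (by nlinarith),
    kneg s s1 s2 (by nlinarith), ?_, ?_, ?_⟩
  · by_contra hcon
    push Not at hcon
    have : 1 ≤ Real.exp (2 * β * (s + h)) := Real.one_le_exp (by positivity)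
    rw [s4, one_le_div (by linarith)] at this
    linarith
  · refine strictAntiOn_of_deriv_neg (convex_Icc _ _) cf.continuousOn fun x hx => ?_
    rw [interior_Icc] at hx
    rw [df x hx.1 (by linarith [hx.2]), ← a3]
    exact m1 ⟨hx.1, by linarith [hx.2]⟩ ⟨a1, by linarith⟩ hx.2
  · refine strictMonoOn_of_deriv_pos (convex_Icc _ _) cf.continuousOn fun x hx => ?_
    rw [interior_Icc] at hx
    rw [df x (by linarith [hx.1]) (by linarith [hx.2])]
    rcases le_total x (-r) with hxr | hxr
    · rw [← a3]
      exact m1 ⟨a1, by linarith⟩ ⟨by linarith [hx.1], hxr⟩ hx.1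
    · rw [← s3]
      exact m2 ⟨hxr, by linarith [hx.2]⟩ ⟨by linarith, by linarith⟩ hx.2
  · refine strictAntiOn_of_deriv_neg (convex_Icc _ _) cf.continuousOn fun x hx => ?_
    rw [interior_Icc] at hx
    rw [df x (by linarith [hx.1]) (by linarith [hx.2])]
    rcases le_total x r with hxr | hxr
    · rw [← s3]
      exact m2 ⟨by linarith, by linarith⟩ ⟨by linarith [hx.1], hxr⟩ hx.1
    · rw [← b3]
      exact m3 ⟨hxr, by linarith [hx.2]⟩ ⟨by linarith, b2⟩ hx.2

lemma taylor2 (f g : ℝ → ℝ) (m κ : ℝ) (hf : ∀ᶠ x in 𝓝 m, HasDerivAt f (g x) x)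
    (hg0 : g m = 0) (hg : HasDerivAt g κ m) :
    (fun x => f x - f m - κ / 2 * (x - m) ^ 2) =o[𝓝 m] fun x => (x - m) ^ 2 := by
  rw [Asymptotics.isLittleO_iff]
  intro ε hε
  have h1 := (hasDerivAt_iff_isLittleO.1 hg).def hε
  obtain ⟨δ, hδ, hball⟩ := Metric.eventually_nhds_iff_ball.1 (h1.and hf)
  filter_upwards [Metric.ball_mem_nhds m hδ] with x hx
  have hx' : |x - m| < δ := by simpa [Real.dist_eq] using hx
  have hsub : ∀ y ∈ Metric.closedBall m |x - m|, y ∈ Metric.ball m δ := by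
    intro y hy
    rw [Metric.mem_ball]; exact lt_of_le_of_lt (Metric.mem_closedBall.1 hy) hx'
  have key := Convex.norm_image_sub_le_of_norm_hasDerivWithin_le
    (f := fun y => f y - f m - κ / 2 * (y - m) ^ 2) (f' := fun y => g y - κ * (y - m))
    (C := ε * |x - m|) (s := Metric.closedBall m |x - m|) (x := m) (y := x)
    (fun y hy => by
      have := (hball y (hsub y hy)).2
      have e := ((this.sub_const (f m)).sub
        ((((hasDerivAt_id y).sub_const m).pow 2).const_mul (κ / 2)))
      refine (e.congr_deriv ?_).hasDerivWithinAt
      simp; ring)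
    (fun y hy => by
      have := (hball y (hsub y hy)).1
      rw [hg0] at this
      simp only [smul_eq_mul, sub_zero, Real.norm_eq_abs] at this
      rw [Real.norm_eq_abs, mul_comm κ]
      refine this.trans ?_
      have hy' : |y - m| ≤ |x - m| := by simpa [Real.dist_eq] using hy
      gcongr)
    (convex_closedBall _ _) (by simp) (by simp [Real.dist_eq])
  have e : f x - f m - κ / 2 * (x - m) ^ 2 - (f m - f m - κ / 2 * (m - m) ^ 2)
      = f x - f m - κ / 2 * (x - m) ^ 2 := by ring
  simp only [e] at key
  refine key.trans (le_of_eq ?_)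
  rw [Real.norm_eq_abs, Real.norm_eq_abs, abs_pow]; ring

lemma taylor2_seq (f g : ℝ → ℝ) (m κ : ℝ) (hf : ∀ᶠ x in 𝓝 m, HasDerivAt f (g x) x)
    (hg0 : g m = 0) (hg : HasDerivAt g κ m) (x : ℕ → ℝ) (t : ℝ)
    (hx : Tendsto (fun N : ℕ => Real.sqrt N * (x N - m)) atTop (𝓝 t)) :
    Tendsto x atTop (𝓝 m) ∧
    Tendsto (fun N : ℕ => N * (f (x N) - f m)) atTop (𝓝 (κ / 2 * t ^ 2)) := by
  have hsq : Tendsto (fun N : ℕ => Real.sqrt N) atTop atTop :=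
    Real.tendsto_sqrt_atTop.comp tendsto_natCast_atTop_atTop
  have hxm : Tendsto x atTop (𝓝 m) := by
    have h1 : Tendsto (fun N : ℕ => m + (Real.sqrt N * (x N - m)) / Real.sqrt N) atTop (𝓝 (m + 0)) :=
      (hx.div_atTop hsq).const_add m
    rw [add_zero] at h1
    refine h1.congr' ?_
    filter_upwards [eventually_ge_atTop 1] with N hN
    have : 0 < Real.sqrt N := Real.sqrt_pos.2 (by exact_mod_cast hN)
    field_simp; ring
  refine ⟨hxm, ?_⟩
  have hx2 : Tendsto (fun N : ℕ => (N : ℝ) * (x N - m) ^ 2) atTop (𝓝 (t ^ 2)) := by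
    refine (hx.pow 2).congr fun N => ?_
    rw [mul_pow, Real.sq_sqrt (Nat.cast_nonneg N)]
  have h1 := (taylor2 f g m κ hf hg0 hg).comp_tendsto hxm
  have h2 : (fun N : ℕ => (N : ℝ) * (f (x N) - f m - κ / 2 * (x N - m) ^ 2)) =o[atTop]
      fun N : ℕ => (N : ℝ) * (x N - m) ^ 2 :=
    (Asymptotics.isBigO_refl (fun N : ℕ => (N : ℝ)) atTop).mul_isLittleO h1
  have h3 := h2.trans_isBigO (hx2.isBigO_one ℝ)
  rw [Asymptotics.isLittleO_one_iff] at h3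
  have := h3.add (hx2.const_mul (κ / 2))
  rw [zero_add] at this
  refine this.congr fun N => ?_
  ring

lemma quad_lower (f g : ℝ → ℝ) (p q m κ : ℝ) (hf : ∀ᶠ x in 𝓝 m, HasDerivAt f (g x) x)
    (hg0 : g m = 0) (hg : HasDerivAt g κ m) (hκ : 0 < κ) (hc : Continuous f)
    (hpos : ∀ x ∈ Set.Icc p q, x ≠ m → f m < f x) :
    ∃ c : ℝ, 0 < c ∧ ∀ x ∈ Set.Icc p q, c * (x - m) ^ 2 ≤ f x - f m := by
  have h1 := (taylor2 f g m κ hf hg0 hg).def (show 0 < κ / 4 by positivity)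
  obtain ⟨δ, hδ, hball⟩ := Metric.eventually_nhds_iff_ball.1 h1
  have hK : IsCompact (Set.Icc p q \ Metric.ball m δ) := isCompact_Icc.diff Metric.isOpen_ball
  obtain ⟨η, hη, hηb⟩ : ∃ η : ℝ, 0 < η ∧ ∀ x ∈ Set.Icc p q \ Metric.ball m δ,
      η * (x - m) ^ 2 ≤ f x - f m := by
    rcases (Set.Icc p q \ Metric.ball m δ).eq_empty_or_nonempty with he | hne
    · exact ⟨1, one_pos, fun x hx => by rw [he] at hx; exact absurd hx (Set.notMem_empty x)⟩
    · have hxm : ∀ x ∈ Set.Icc p q \ Metric.ball m δ, x ≠ m := by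
        rintro x hx rfl; exact hx.2 (Metric.mem_ball_self hδ)
      obtain ⟨x0, hx0, hmin⟩ := hK.exists_isMinOn hne
        (f := fun x => (f x - f m) / (x - m) ^ 2) (by
          refine ContinuousOn.div (by fun_prop) (by fun_prop) fun x hx => ?_
          have := sub_ne_zero.2 (hxm x hx)
          positivity)
      have hp0 : 0 < (x0 - m) ^ 2 := by
        have := sub_ne_zero.2 (hxm x0 hx0); positivity
      refine ⟨(f x0 - f m) / (x0 - m) ^ 2, ?_, fun x hx => ?_⟩
      · have := hpos x0 hx0.1 (hxm x0 hx0)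
        exact div_pos (by linarith) hp0
      · have hp : 0 < (x - m) ^ 2 := by
          have := sub_ne_zero.2 (hxm x hx); positivity
        have := hmin hx
        simp only [Set.mem_ofPred_eq] at this
        rwa [le_div_iff₀ hp] at this
  refine ⟨min η (κ / 4), lt_min hη (by positivity), fun x hx => ?_⟩
  have hsq := sq_nonneg (x - m)
  by_cases hb : x ∈ Metric.ball m δ
  · have := hball x hb
    rw [Real.norm_eq_abs, Real.norm_eq_abs, abs_of_nonneg hsq] at this
    have h2 := neg_abs_le (f x - f m - κ / 2 * (x - m) ^ 2)
    have h3 := min_le_right η (κ / 4)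
    nlinarith
  · have := hηb x ⟨hx, hb⟩
    have h3 := min_le_left η (κ / 4)
    nlinarith

lemma xk_mono (N : ℕ) {i j : ℕ} (hij : i ≤ j) : xk N i ≤ xk N j := by
  have : (i : ℝ) ≤ j := by exact_mod_cast hij
  unfold xk
  gcongr

lemma lt_of_xk_lt {N i j : ℕ} (h : xk N i < xk N j) : i < j := by
  by_contra hc
  push Not at hc
  exact absurd (xk_mono N hc) (not_le.2 h)

lemma le_exp_bound (η : ℝ) (hη : 0 < η) (x : ℝ) : x ≤ 1 / η * Real.exp (η * x) := by
  have := Real.add_one_le_exp (η * x)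
  rw [div_mul_eq_mul_div, one_mul, le_div_iff₀ hη]
  linarith

lemma sqrt_le_self_nat {N : ℕ} (hN : 0 < N) : Real.sqrt N ≤ N := by
  have : (1 : ℝ) ≤ N := by exact_mod_cast hN
  rw [Real.sqrt_le_left (by linarith)]
  nlinarith

lemma inner_dom (β h a m' c1 : ℝ) (hβ : 0 < β) (ha : -1 < a) (hm' : m' < 1) (hc1 : 0 < c1)
    (ham : a < m')
    (hq : ∀ x ∈ Set.Icc (-1) m', c1 * (x - a) ^ 2 ≤ fE β h x - fE β h a) :
    ∃ K : ℝ, 0 ≤ K ∧ ∀ N k : ℕ, 0 < N → k ≤ N → xk N k ≤ m' →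
      Real.sqrt N * (Real.exp (β * N * fE β h a) * Qw N β h k) ≤
        K * Real.exp (-(β * c1 / 2) * (N * (xk N k - a) ^ 2)) := by
  obtain ⟨p, hp1, hp2⟩ := exists_between ha
  obtain ⟨C, hC, hCu⟩ := Cn_upper (max |p| |m'|) (le_max_of_le_left (abs_nonneg _))
    (max_lt (abs_lt.2 ⟨hp1, by linarith⟩) (abs_lt.2 ⟨by linarith, hm'⟩))
  set η : ℝ := β * c1 / 2 * (p - a) ^ 2 with hη
  have hη0 : 0 < η := by
    have : (p - a) ≠ 0 := by linarith
    positivity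
  refine ⟨C + 1 / η, by positivity, fun N k hN hk hx => ?_⟩
  have hx1 := neg_one_le_xk N k
  have hN' : (0 : ℝ) < N := by exact_mod_cast hN
  set x := xk N k with hxd
  have hqx := hq x ⟨hx1, hx⟩
  have e1 : Real.sqrt N * (Real.exp (β * N * fE β h a) * Qw N β h k) =
      Real.sqrt N * Cn N k * Real.exp (-β * N * (fE β h x - fE β h a)) := by
    rw [Qw_eq N β h hβ.ne' k, ← hxd]
    have : Real.exp (-β * N * (fE β h x - fE β h a)) =
      Real.exp (β * N * fE β h a) * Real.exp (-β * N * fE β h x) := by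
      rw [← Real.exp_add]; congr 1; ring
    rw [this]; ring
  have hCn0 : 0 ≤ Cn N k := by unfold Cn; positivity
  have e2 : Real.exp (-β * N * (fE β h x - fE β h a)) ≤
      Real.exp (-(β * c1 / 2) * (N * (x - a) ^ 2)) * Real.exp (-(β * c1 / 2) * (N * (x - a) ^ 2)) := by
    rw [← Real.exp_add]
    apply Real.exp_le_exp.2
    have := mul_le_mul_of_nonneg_left hqx (show 0 ≤ β * N by positivity)
    linarith
  set X := Real.exp (-(β * c1 / 2) * (N * (x - a) ^ 2)) with hX
  have hX0 : 0 < X := Real.exp_pos _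
  have hX1 : X ≤ 1 := by
    apply Real.exp_le_one_iff.2
    have : 0 ≤ (β * c1 / 2) * (N * (x - a) ^ 2) := by positivity
    linarith
  rw [e1]
  have hb : Real.sqrt N * Cn N k * X ≤ C + 1 / η := by
    rcases le_total p x with hpx | hpx
    · have h1 := hCu N k hN hk (by
        rw [abs_le]
        have h1 := le_max_left |p| |m'|
        have h2 := le_max_right |p| |m'|
        have h3 := neg_abs_le p
        have h4 := le_abs_self m'
        constructor <;> linarith)
      have : Real.sqrt N * Cn N k * X ≤ Real.sqrt N * Cn N k * 1 := by gcongr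
      have : 0 < 1 / η := by positivity
      linarith
    · have h1 := Cn_le_one hN hk
      have h2 : X ≤ Real.exp (-(η * N)) := by
        apply Real.exp_le_exp.2
        have : (p - a) ^ 2 ≤ (x - a) ^ 2 := by nlinarith
        have := mul_le_mul_of_nonneg_left this (show 0 ≤ β * c1 / 2 * N by positivity)
        rw [hη]; linarith
      have h3 := le_exp_bound η hη0 N
      have h4 := sqrt_le_self_nat hN
      calc Real.sqrt N * Cn N k * X ≤ N * 1 * Real.exp (-(η * N)) := by gcongr
        _ ≤ (1 / η * Real.exp (η * N)) * 1 * Real.exp (-(η * N)) := by gcongr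
        _ = 1 / η := by
          rw [mul_one, mul_assoc, ← Real.exp_add]; simp
        _ ≤ C + 1 / η := by linarith
  calc Real.sqrt N * Cn N k * Real.exp (-β * N * (fE β h x - fE β h a))
      ≤ Real.sqrt N * Cn N k * (X * X) := by gcongr
    _ = (Real.sqrt N * Cn N k * X) * X := by ring
    _ ≤ (C + 1 / η) * X := by gcongr

/-- limiting prefactor -/
def Dl (m : ℝ) : ℝ := Real.sqrt Real.pi / (Real.sqrt Real.pi * Real.sqrt Real.pi) *
        (Real.sqrt 2 / Real.sqrt (1 - m ^ 2))

lemma Q_tendsto (β h m : ℝ) (hβ : 0 < β) (h1 : -1 < m) (h2 : m < 1) (hfp : fp β h m = 0)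
    (k : ℕ → ℕ) (hk : ∀ᶠ N in atTop, k N ≤ N) (t : ℝ)
    (ht : Tendsto (fun N : ℕ => Real.sqrt N * (xk N (k N) - m)) atTop (𝓝 t)) :
    Tendsto (fun N => xk N (k N)) atTop (𝓝 m) ∧
    Tendsto (fun N : ℕ => Real.sqrt N * (Real.exp (β * N * fE β h m) * Qw N β h (k N))) atTop
      (𝓝 (Dl m * Real.exp (-(β * fpp β m / 2) * t ^ 2))) := by
  have hev : ∀ᶠ x in 𝓝 m, HasDerivAt (fE β h) (fp β h x) x := by
    filter_upwards [Ioo_mem_nhds h1 h2] with x hx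
    exact hasDerivAt_fE β h x hx.1 hx.2
  obtain ⟨ha, hb⟩ := taylor2_seq (fE β h) (fp β h) m (fpp β m) hev hfp
    (hasDerivAt_fp β h m h1 h2) (fun N => xk N (k N)) t ht
  refine ⟨ha, ?_⟩
  have hc := Cn_tendsto m h1 h2 k hk ha
  have hd := (Real.continuous_exp.tendsto _).comp (hb.const_mul (-β))
  have := hc.mul hd
  have e : Dl m * Real.exp (-(β * fpp β m / 2) * t ^ 2) =
      Dl m * Real.exp (-β * (fpp β m / 2 * t ^ 2)) := by congr 2; ring
  rw [e]
  refine this.congr fun N => ?_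
  rw [Qw_eq N β h hβ.ne']
  have : Real.exp (-β * (N * (fE β h (xk N (k N)) - fE β h m))) =
      Real.exp (β * N * fE β h m) * Real.exp (-β * N * fE β h (xk N (k N))) := by
    rw [← Real.exp_add]; congr 1; ring
  simp only [Function.comp]
  rw [this]; ring

/-- limit of the normalised cumulative weights -/
def Sl (β a : ℝ) : ℝ := 1 / 2 * ∫ t : ℝ, Dl a * Real.exp (-(β * fpp β a / 2) * t ^ 2)

lemma inner_tendsto (β h a m' c1 δ : ℝ) (hβ : 0 < β) (ha : -1 < a) (hm' : m' < 1) (hc1 : 0 < c1)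
    (ham : a < m') (hδ : 0 < δ) (hfp : fp β h a = 0)
    (hq : ∀ x ∈ Set.Icc (-1) m', c1 * (x - a) ^ 2 ≤ fE β h x - fE β h a)
    (i : ℕ → ℕ) (hi : ∀ᶠ N in atTop, i N ≤ N) (hi1 : ∀ᶠ N in atTop, a + δ ≤ xk N (i N))
    (hi2 : ∀ᶠ N in atTop, xk N (i N) ≤ m') :
    Tendsto (fun N : ℕ => Real.exp (β * N * fE β h a) * Sw N β h (i N)) atTop (𝓝 (Sl β a)) := by
  obtain ⟨K, hK, hdom⟩ := inner_dom β h a m' c1 hβ ha hm' hc1 ham hq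
  have key := laplace_sum a ha (by linarith)
    (fun N k => if k ≤ i N then Real.sqrt N * (Real.exp (β * N * fE β h a) * Qw N β h k) else 0)
    K (β * c1 / 2) hK (by positivity)
    (fun t => Dl a * Real.exp (-(β * fpp β a / 2) * t ^ 2))
    (by
      filter_upwards [hi2, eventually_gt_atTop 0] with N h2 hN k hk
      split_ifs with hki
      · have hQ := Qw_nonneg N β h k
        rw [abs_of_nonneg (by positivity)]
        exact hdom N k hN hk ((xk_mono N hki).trans h2)
      · rw [abs_zero]; positivity)
    (by
      intro t k hk ht
      obtain ⟨h1, h2⟩ := Q_tendsto β h a hβ ha (by linarith) hfp k hk t ht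
      refine h2.congr' ?_
      filter_upwards [hi1, h1.eventually (gt_mem_nhds (show a < a + δ by linarith))] with N e1 e2
      rw [if_pos (lt_of_xk_lt (lt_of_lt_of_le e2 e1)).le])
  refine key.congr' ?_
  filter_upwards [hi, eventually_gt_atTop 0] with N hN hN0
  have hs : Real.sqrt N ≠ 0 := (Real.sqrt_pos.2 (by exact_mod_cast hN0)).ne'
  rw [← Finset.sum_filter]
  have : (range (N + 1)).filter (fun k => k ≤ i N) = range (i N + 1) := by
    ext k; simp only [mem_filter, mem_range]; omega
  rw [this, ← Finset.mul_sum, ← Finset.mul_sum]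
  unfold Sw
  field_simp

lemma Sw_mono (N : ℕ) (β h : ℝ) {i j : ℕ} (hij : i ≤ j) : Sw N β h i ≤ Sw N β h j := by
  unfold Sw
  apply Finset.sum_le_sum_of_subset_of_nonneg
  · intro k; simp only [mem_range]; omega
  · intro k _ _; exact Qw_nonneg _ _ _ _

lemma inner_bound (β h a m' c1 : ℝ) (hβ : 0 < β) (ha : -1 < a) (hm' : m' < 1) (hc1 : 0 < c1)
    (ham : a < m') (hfp : fp β h a = 0)
    (hq : ∀ x ∈ Set.Icc (-1) m', c1 * (x - a) ^ 2 ≤ fE β h x - fE β h a) :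
    ∃ C : ℝ, 0 < C ∧ ∀ᶠ N : ℕ in atTop, ∀ i, xk N i ≤ m' →
      Real.exp (β * N * fE β h a) * Sw N β h i ≤ C := by
  set i0 : ℕ → ℕ := fun N => ⌊(N : ℝ) * (1 + m') / 2⌋₊ with hi0
  have hp : 0 < 1 + m' := by linarith
  have f1 : ∀ N : ℕ, (i0 N : ℝ) ≤ N * (1 + m') / 2 := fun N => Nat.floor_le (by positivity)
  have f2 : ∀ N : ℕ, (N : ℝ) * (1 + m') / 2 < i0 N + 1 := fun N => Nat.lt_floor_add_one _
  have g1 : ∀ᶠ N in atTop, i0 N ≤ N := by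
    filter_upwards with N
    have : (i0 N : ℝ) ≤ N := by
      refine (f1 N).trans ?_
      have : (0 : ℝ) ≤ N := Nat.cast_nonneg N
      nlinarith
    exact_mod_cast this
  have g2 : ∀ᶠ N in atTop, xk N (i0 N) ≤ m' := by
    filter_upwards [eventually_gt_atTop 0] with N hN
    have hN' : (0 : ℝ) < N := by exact_mod_cast hN
    have : 2 * (i0 N : ℝ) / N ≤ 1 + m' := by
      rw [div_le_iff₀ hN']; linarith [f1 N]
    unfold xk; linarith
  have hlim : Tendsto (fun N : ℕ => (2 : ℝ) / N) atTop (𝓝 0) :=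
    tendsto_const_nhds.div_atTop tendsto_natCast_atTop_atTop
  have g3 : ∀ᶠ N in atTop, a + (m' - a) / 2 ≤ xk N (i0 N) := by
    filter_upwards [eventually_gt_atTop 0,
      hlim.eventually (gt_mem_nhds (show 0 < (m' - a) / 2 by linarith))] with N hN h2
    have hN' : (0 : ℝ) < N := by exact_mod_cast hN
    have : 1 + m' - 2 / N ≤ 2 * (i0 N : ℝ) / N := by
      rw [le_div_iff₀ hN', sub_mul, div_mul_cancel₀ _ hN'.ne']; linarith [f2 N]
    unfold xk; linarith
  have := inner_tendsto β h a m' c1 ((m' - a) / 2) hβ ha hm' hc1 ham (by linarith) hfp hq i0 g1 g3 g2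
  refine ⟨|Sl β a| + 1, by positivity, ?_⟩
  filter_upwards [this.eventually (gt_mem_nhds (show Sl β a < |Sl β a| + 1 by
    linarith [le_abs_self (Sl β a)])), eventually_gt_atTop 0] with N hN hN0 i hi
  have hN' : (0 : ℝ) < N := by exact_mod_cast hN0
  refine le_trans ?_ hN.le
  have : i ≤ i0 N := by
    apply Nat.le_floor
    have : 2 * (i : ℝ) / N ≤ 1 + m' := by unfold xk at hi; linarith
    rw [div_le_iff₀ hN'] at this
    linarith
  have := Sw_mono N β h this
  gcongr

lemma Em_step (h x d : ℝ) : Em h (x + d) - Em h x = -(d * (x + h)) - d ^ 2 / 2 := by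
  unfold Em; ring

lemma upR_lower (β h b : ℝ) (hβ : 0 < β) (hh : 0 < h) {N i : ℕ} (hN : 0 < N)
    (hi : xk N i ≤ b) : Real.exp (-(2 * β)) * ((1 - b) / 2) ≤ upR N β h i ∨ 1 ≤ b := by
  by_cases hb : 1 ≤ b
  · exact Or.inr hb
  left
  push Not at hb
  have hN' : (0 : ℝ) < N := by exact_mod_cast hN
  have hx := neg_one_le_xk N i
  unfold upR
  rw [xk_succ, Em_step]
  have hm : max (-(2 / (N : ℝ) * (xk N i + h)) - (2 / (N : ℝ)) ^ 2 / 2) (0 : ℝ) ≤ 2 / (N : ℝ) := by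
    apply max_le _ (by positivity)
    have : (2 / (N : ℝ)) * (-1) ≤ 2 / N * (xk N i + h) := by gcongr; linarith
    have : 0 ≤ (2 / (N : ℝ)) ^ 2 / 2 := by positivity
    linarith
  have : Real.exp (-(2 * β)) ≤
      Real.exp (-β * N * max (-(2 / (N : ℝ) * (xk N i + h)) - (2 / (N : ℝ)) ^ 2 / 2) (0 : ℝ)) := by
    apply Real.exp_le_exp.2
    have h1 := mul_le_mul_of_nonneg_left hm (show 0 ≤ β * N by positivity)
    have : β * N * (2 / N) = 2 * β := by field_simp
    linarith
  have : 0 < 1 - b := by linarith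
  gcongr

lemma upR_tendsto (β h s : ℝ) (hs : s + h < 0) (hs1 : s < 1)
    (es : Real.exp (2 * β * (s + h)) = (1 + s) / (1 - s)) (i : ℕ → ℕ)
    (hi : Tendsto (fun N => xk N (i N)) atTop (𝓝 s)) :
    Tendsto (fun N => upR N β h (i N)) atTop (𝓝 ((1 + s) / 2)) := by
  have hlim : Tendsto (fun N : ℕ => (2 : ℝ) / N) atTop (𝓝 0) :=
    tendsto_const_nhds.div_atTop tendsto_natCast_atTop_atTop
  have h1 : Tendsto (fun N => 2 * β * (xk N (i N) + h) + β * (2 / (N : ℝ))) atTop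
      (𝓝 (2 * β * (s + h) + β * 0)) :=
    ((hi.add_const h).const_mul _).add (hlim.const_mul _)
  have h2 := ((Real.continuous_exp.tendsto _).comp h1).mul ((hi.const_sub 1).div_const 2)
  have e : Real.exp (2 * β * (s + h) + β * 0) * ((1 - s) / 2) = (1 + s) / 2 := by
    rw [mul_zero, add_zero, es]
    have : 1 - s ≠ 0 := by linarith
    field_simp
  rw [e] at h2
  refine h2.congr' ?_
  have h3 : Tendsto (fun N => xk N (i N) + h + (2 / (N : ℝ)) / 2) atTop (𝓝 (s + h + 0 / 2)) :=
    (hi.add_const h).add (hlim.div_const 2)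
  filter_upwards [eventually_gt_atTop 0,
    h3.eventually (gt_mem_nhds (show s + h + 0 / 2 < 0 by linarith))] with N hN h4
  have hN' : (0 : ℝ) < N := by exact_mod_cast hN
  simp only [Function.comp]
  unfold upR
  rw [xk_succ, Em_step, max_eq_left]
  · congr 2
    field_simp
    ring
  · have : 0 ≤ (2 / (N : ℝ)) * (-(xk N (i N) + h + (2 / (N : ℝ)) / 2)) := by
      apply mul_nonneg (by positivity); linarith
    nlinarith

lemma gauss_const (β κ : ℝ) (hβ : 0 < β) (hκ : 0 < κ) :
    ∫ t : ℝ, Real.exp (-(β * κ / 2) * t ^ 2) =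
      Real.sqrt Real.pi * Real.sqrt 2 / (Real.sqrt β * Real.sqrt κ) := by
  rw [integral_gaussian]
  have : Real.pi / (β * κ / 2) = Real.pi * 2 / (β * κ) := by field_simp
  rw [this, Real.sqrt_div (by positivity), Real.sqrt_mul (by positivity),
    Real.sqrt_mul hβ.le]

lemma const_eq (β a s : ℝ) (hβ : 0 < β) (ha : 0 < 1 - a ^ 2) (hs : 0 < 1 - s ^ 2) (hs' : 0 < 1 + s)
    (ka : 0 < fpp β a) (ks : fpp β s < 0) :
    1 / 2 * ∫ t : ℝ, (Dl s * Real.exp (-(β * fpp β s / 2) * t ^ 2))⁻¹ * ((1 + s) / 2)⁻¹ * Sl β a =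
      Real.pi / (1 + s) * Real.sqrt ((1 - s ^ 2) / (1 - a ^ 2)) /
        (β * Real.sqrt (fpp β a * (-fpp β s))) := by
  have e : ∀ t : ℝ, (Dl s * Real.exp (-(β * fpp β s / 2) * t ^ 2))⁻¹ * ((1 + s) / 2)⁻¹ * Sl β a =
      ((Dl s)⁻¹ * ((1 + s) / 2)⁻¹ * Sl β a) * Real.exp (-(β * (-fpp β s) / 2) * t ^ 2) := by
    intro t
    rw [mul_inv, ← Real.exp_neg]
    have : -(-(β * fpp β s / 2) * t ^ 2) = -(β * (-fpp β s) / 2) * t ^ 2 := by ring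
    rw [this]; ring
  simp_rw [e]
  rw [integral_const_mul, gauss_const β _ hβ (by linarith)]
  unfold Sl
  rw [integral_const_mul, gauss_const β _ hβ ka]
  unfold Dl
  rw [Real.sqrt_div hs.le, Real.sqrt_mul ka.le]
  have hP : Real.sqrt Real.pi * Real.sqrt Real.pi = Real.pi := Real.mul_self_sqrt Real.pi_pos.le
  have hB : Real.sqrt β * Real.sqrt β = β := Real.mul_self_sqrt hβ.le
  have hT : Real.sqrt 2 * Real.sqrt 2 = 2 := Real.mul_self_sqrt (by norm_num)
  have pP : 0 < Real.sqrt Real.pi := Real.sqrt_pos.2 Real.pi_pos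
  have pB : 0 < Real.sqrt β := Real.sqrt_pos.2 hβ
  have pT : 0 < Real.sqrt 2 := Real.sqrt_pos.2 (by norm_num)
  have p1 : 0 < Real.sqrt (1 - a ^ 2) := Real.sqrt_pos.2 ha
  have p2 : 0 < Real.sqrt (1 - s ^ 2) := Real.sqrt_pos.2 hs
  have p3 : 0 < Real.sqrt (fpp β a) := Real.sqrt_pos.2 ka
  have p4 : 0 < Real.sqrt (-fpp β s) := Real.sqrt_pos.2 (by linarith)
  generalize Real.sqrt (1 - a ^ 2) = A at *
  generalize Real.sqrt (1 - s ^ 2) = S at *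
  generalize Real.sqrt (fpp β a) = Ka at *
  generalize Real.sqrt (-fpp β s) = Ks at *
  generalize Real.sqrt Real.pi = P at *
  generalize Real.sqrt β = B at *
  generalize Real.sqrt 2 = T at *
  rw [← hP]
  conv_rhs => rw [← hB]
  field_simp
  nlinarith [hT]

set_option maxHeartbeats 2000000 in
lemma outer_tendsto (β h a s b : ℝ) (hβ : 0 < β) (hh : 0 < h) (W : WellFacts β h a s b)
    (aN bN : ℕ → ℕ) (hbN : ∀ᶠ N in atTop, bN N ≤ N)
    (hab : ∀ᶠ N in atTop, |a - xk N (aN N)| ≤ 2 / N)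
    (hbb : ∀ᶠ N in atTop, |b - xk N (bN N)| ≤ 2 / N) :
    Tendsto (fun N : ℕ => (N : ℝ)⁻¹ * Real.exp (-(β * N * (fE β h s - fE β h a))) *
        ∑ i ∈ Ico (aN N) (bN N), (Qw N β h i * upR N β h i)⁻¹ * Sw N β h i) atTop
      (𝓝 (1 / 2 * ∫ t : ℝ, (Dl s * Real.exp (-(β * fpp β s / 2) * t ^ 2))⁻¹ *
        ((1 + s) / 2)⁻¹ * Sl β a)) := by
  have cf := continuous_fE β h
  have a1 := W.a1
  have has := W.as
  have hsb := W.sb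
  have b1 := W.b1
  have hfas : fE β h a < fE β h s := W.mono ⟨le_rfl, has.le⟩ ⟨has.le, le_rfl⟩ has
  -- auxiliary points
  obtain ⟨m', hm1, hm2, hm3⟩ : ∃ m', s < m' ∧ m' < b ∧ fE β h a < fE β h m' := by
    have e1 : ∀ᶠ x in 𝓝[>] s, fE β h a < fE β h x :=
      (cf.tendsto s).eventually (lt_mem_nhds hfas) |>.filter_mono nhdsWithin_le_nhds
    have e2 : ∀ᶠ x in 𝓝[>] s, x < b := (gt_mem_nhds hsb).filter_mono nhdsWithin_le_nhds
    obtain ⟨x, h1, h2, h3⟩ := (e1.and (e2.and self_mem_nhdsWithin)).exists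
    exact ⟨x, h3, h2, h1⟩
  obtain ⟨p, hp1, hp2, hp3⟩ : ∃ p, -1 < p ∧ p < a ∧ fE β h p < fE β h s := by
    have e1 : ∀ᶠ x in 𝓝[<] a, fE β h x < fE β h s :=
      (cf.tendsto a).eventually (gt_mem_nhds hfas) |>.filter_mono nhdsWithin_le_nhds
    have e2 : ∀ᶠ x in 𝓝[<] a, -1 < x := (lt_mem_nhds a1).filter_mono nhdsWithin_le_nhds
    obtain ⟨x, h1, h2, h3⟩ := (e1.and (e2.and self_mem_nhdsWithin)).exists
    exact ⟨x, h2, h3, h1⟩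
  have evD : ∀ m, -1 < m → m < 1 → ∀ᶠ x in 𝓝 m, HasDerivAt (fE β h) (fp β h x) x := by
    intro m h1 h2
    filter_upwards [Ioo_mem_nhds h1 h2] with x hx
    exact hasDerivAt_fE β h x hx.1 hx.2
  have hms : fE β h m' < fE β h s := W.anti2 ⟨le_rfl, hsb.le⟩ ⟨hm1.le, hm2.le⟩ hm1
  have low1 : ∀ x ∈ Set.Icc (-1) m', x ≠ a → fE β h a < fE β h x := by
    intro x hx hxa
    rcases lt_or_gt_of_ne hxa with h1 | h1
    · exact W.anti1 ⟨hx.1, h1.le⟩ ⟨a1.le, le_rfl⟩ h1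
    · rcases le_total x s with h2 | h2
      · exact W.mono ⟨le_rfl, has.le⟩ ⟨h1.le, h2⟩ h1
      · exact lt_of_lt_of_le hm3
          (W.anti2.antitoneOn ⟨h2, by linarith [hx.2]⟩ ⟨hm1.le, hm2.le⟩ hx.2)
  obtain ⟨c1, hc1, hq1⟩ := quad_lower (fE β h) (fp β h) (-1) m' a (fpp β a)
    (evD a a1 (by linarith)) W.fpa (hasDerivAt_fp β h a a1 (by linarith)) W.ka cf low1
  obtain ⟨c2, hc2, hq2⟩ := quad_lower (fun x => -fE β h x) (fun x => -fp β h x) p m' s (-fpp β s)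
    ((evD s (by linarith) (by linarith)).mono fun x hx => hx.neg) (by simp [W.fps])
    (hasDerivAt_fp β h s (by linarith) (by linarith)).neg (by linarith [W.ks]) cf.neg (by
      intro x hx hxs
      apply neg_lt_neg
      rcases lt_or_gt_of_ne hxs with h1 | h1
      · rcases le_total x a with h2 | h2
        · exact lt_of_le_of_lt
            (W.anti1.antitoneOn ⟨by linarith, hp2.le⟩ ⟨by linarith [hx.1], h2⟩ hx.1) hp3
        · exact W.mono ⟨h2, h1.le⟩ ⟨has.le, le_rfl⟩ h1
      · exact W.anti2 ⟨le_rfl, hsb.le⟩ ⟨h1.le, by linarith [hx.2]⟩ h1)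
  have hm'1 : m' < 1 := by linarith
  have ham' : a < m' := by linarith
  obtain ⟨CS, hCS, hSb⟩ := inner_bound β h a m' c1 hβ a1 hm'1 hc1 ham' W.fpa hq1
  obtain ⟨cl, hcl, hCl⟩ := Cn_lower
  set u0 : ℝ := Real.exp (-(2 * β)) * ((1 - b) / 2) with hu0
  have hu0p : 0 < u0 := mul_pos (Real.exp_pos _) (by linarith)
  set η : ℝ := β * (fE β h s - fE β h m') with hη
  have hη0 : 0 < η := mul_pos hβ (by linarith)
  have hlim : Tendsto (fun N : ℕ => (2 : ℝ) / N) atTop (𝓝 0) :=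
    tendsto_const_nhds.div_atTop tendsto_natCast_atTop_atTop
  set A : ℕ → ℕ → ℝ := fun N i => if i ∈ Ico (aN N) (bN N) then
    (Real.sqrt N * (Real.exp (β * N * fE β h s) * Qw N β h i))⁻¹ * (upR N β h i)⁻¹ *
      (Real.exp (β * N * fE β h a) * Sw N β h i) else 0 with hA
  set K : ℝ := cl⁻¹ * u0⁻¹ * CS + cl⁻¹ * u0⁻¹ * (4 / η) with hK
  set c : ℝ := min (β * c2) (η / 8) with hc
  have hc0 : 0 < c := lt_min (by positivity) (by positivity)
  have hK0 : 0 ≤ K := by positivity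
  have H1 : ∀ᶠ N : ℕ in atTop, ∀ k ≤ N, |A N k| ≤ K * Real.exp (-c * (N * (xk N k - s) ^ 2)) := by
    filter_upwards [hbN, hab, hbb, hSb, eventually_gt_atTop 0,
      hlim.eventually (gt_mem_nhds (show 0 < a - p by linarith))] with N hbN hab hbb hSb hN hap i hi
    have hN' : (0 : ℝ) < N := by exact_mod_cast hN
    simp only [hA]
    split_ifs with hmem
    swap
    · rw [abs_zero]; positivity
    rw [mem_Ico] at hmem
    have hiN : i < N := by omega
    have x1 : p ≤ xk N i := by
      have h1 := xk_mono N hmem.1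
      have h2 := (abs_le.1 hab).2
      linarith
    have x2 : xk N i ≤ b := by
      have h1 := xk_mono N (show i + 1 ≤ bN N by omega)
      rw [xk_succ] at h1
      have h2 := (abs_le.1 hbb).1
      linarith
    have hi0 : 0 < i := by
      by_contra hcon
      have : i = 0 := by omega
      rw [this] at x1
      simp [xk] at x1
      linarith
    have hu : u0 ≤ upR N β h i := by
      rcases upR_lower β h b hβ hh hN x2 with h1 | h1
      · exact h1
      · linarith
    have hCn := hCl N i hi0 hiN
    have hS := Sw_nonneg N β h i
    have hQ := Qw_pos N β h hi
    have hsN : 0 < Real.sqrt N := Real.sqrt_pos.2 hN'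
    have hup : 0 < upR N β h i := lt_of_lt_of_le hu0p hu
    rw [abs_of_nonneg (by positivity)]
    set x := xk N i with hx
    have eQ : (Real.sqrt N * (Real.exp (β * N * fE β h s) * Qw N β h i))⁻¹ =
        (Real.sqrt N * Cn N i)⁻¹ * Real.exp (-(β * N * (fE β h s - fE β h x))) := by
      rw [Qw_eq N β h hβ.ne' i, Real.exp_neg, ← mul_inv]
      congr 1
      have : Real.exp (β * N * (fE β h s - fE β h x)) =
        Real.exp (β * N * fE β h s) * Real.exp (-β * N * fE β h x) := by
        rw [← Real.exp_add]; congr 1; ring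
      rw [this]; ring
    rw [eQ]
    have i1 : (Real.sqrt N * Cn N i)⁻¹ ≤ cl⁻¹ := inv_anti₀ hcl hCn
    have i2 : (upR N β h i)⁻¹ ≤ u0⁻¹ := inv_anti₀ hu0p hu
    have hcn0 : 0 < Real.sqrt N * Cn N i := lt_of_lt_of_le hcl hCn
    have hE0 : 0 ≤ Real.exp (β * N * fE β h a) * Sw N β h i := by positivity
    have step : (Real.sqrt N * Cn N i)⁻¹ * Real.exp (-(β * N * (fE β h s - fE β h x))) *
        (upR N β h i)⁻¹ * (Real.exp (β * N * fE β h a) * Sw N β h i) ≤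
        cl⁻¹ * Real.exp (-(β * N * (fE β h s - fE β h x))) *
        u0⁻¹ * (Real.exp (β * N * fE β h a) * Sw N β h i) := by
      gcongr
    refine step.trans ?_
    have hxs : 0 ≤ (N : ℝ) * (x - s) ^ 2 := by positivity
    rcases le_total x m' with hxm | hxm
    · have g1 := hSb i hxm
      have g2 : Real.exp (-(β * N * (fE β h s - fE β h x))) ≤
          Real.exp (-c * (N * (x - s) ^ 2)) := by
        apply Real.exp_le_exp.2
        have g3 := mul_le_mul_of_nonneg_left (hq2 x ⟨x1, hxm⟩) (show 0 ≤ β * N by positivity)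
        have g4 := mul_le_mul_of_nonneg_right (min_le_left (β * c2) (η / 8)) hxs
        rw [← hc] at g4
        linarith
      calc cl⁻¹ * Real.exp (-(β * N * (fE β h s - fE β h x))) *
            u0⁻¹ * (Real.exp (β * N * fE β h a) * Sw N β h i)
          ≤ cl⁻¹ * Real.exp (-c * (N * (x - s) ^ 2)) * u0⁻¹ * CS := by gcongr
        _ = (cl⁻¹ * u0⁻¹ * CS) * Real.exp (-c * (N * (x - s) ^ 2)) := by ring
        _ ≤ K * Real.exp (-c * (N * (x - s) ^ 2)) := by
          have : 0 ≤ cl⁻¹ * u0⁻¹ * (4 / η) := by positivity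
          gcongr
          linarith
    · have hSw : Sw N β h i ≤
          (N + 1) * Real.exp (-β * N * (fE β h x - fE β h m' + fE β h a)) := by
        unfold Sw
        have : ∀ j ∈ range (i + 1), Qw N β h j ≤
            Real.exp (-β * N * (fE β h x - fE β h m' + fE β h a)) := by
          intro j hj
          rw [mem_range] at hj
          have hji : xk N j ≤ x := xk_mono N (by omega)
          rw [Qw_eq N β h hβ.ne' j]
          have hfx : fE β h x ≤ fE β h m' :=
            W.anti2.antitoneOn ⟨hm1.le, hm2.le⟩ ⟨by linarith, x2⟩ hxm
          have hfj : fE β h x - fE β h m' + fE β h a ≤ fE β h (xk N j) := by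
            rcases le_total (xk N j) m' with h1 | h1
            · have : fE β h a ≤ fE β h (xk N j) := by
                by_cases h2 : xk N j = a
                · rw [h2]
                · exact (low1 _ ⟨neg_one_le_xk N j, h1⟩ h2).le
              linarith
            · have : fE β h x ≤ fE β h (xk N j) :=
                W.anti2.antitoneOn ⟨by linarith, by linarith⟩ ⟨by linarith, x2⟩ hji
              linarith
          have h3 := Cn_le_one hN (show j ≤ N by omega)
          have h4 : Real.exp (-β * N * fE β h (xk N j)) ≤
              Real.exp (-β * N * (fE β h x - fE β h m' + fE β h a)) := by
            apply Real.exp_le_exp.2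
            have := mul_le_mul_of_nonneg_left hfj (show 0 ≤ β * N by positivity)
            linarith
          calc Cn N j * Real.exp (-β * N * fE β h (xk N j))
              ≤ 1 * Real.exp (-β * N * (fE β h x - fE β h m' + fE β h a)) := by gcongr
            _ = _ := one_mul _
        refine (Finset.sum_le_card_nsmul _ _ _ this).trans ?_
        rw [card_range, nsmul_eq_mul]
        have : ((i + 1 : ℕ) : ℝ) ≤ N + 1 := by
          push_cast
          have : (i : ℝ) ≤ N := by exact_mod_cast hi
          linarith
        gcongr
      have hpoly : ((N : ℝ) + 1) ≤ 4 / η * Real.exp (η / 2 * N) := by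
        have h1 := le_exp_bound (η / 2) (by positivity) N
        have h2 : (1 : ℝ) ≤ N := by exact_mod_cast hN
        have : 4 / η * Real.exp (η / 2 * N) = 2 * (1 / (η / 2) * Real.exp (η / 2 * N)) := by
          field_simp; norm_num
        rw [this]; linarith
      have hfin : Real.exp (-(η / 2 * N)) ≤ Real.exp (-c * (N * (x - s) ^ 2)) := by
        apply Real.exp_le_exp.2
        have h1 : (x - s) ^ 2 ≤ 4 := by
          have g1 : 0 ≤ x - s := by linarith
          have g2 : x - s ≤ 2 := by linarith
          calc (x - s) ^ 2 ≤ 2 ^ 2 := pow_le_pow_left₀ g1 g2 2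
            _ = 4 := by norm_num
        have h2 : (N : ℝ) * (x - s) ^ 2 ≤ N * 4 := by gcongr
        have h3 := mul_le_mul (min_le_right (β * c2) (η / 8)) h2 hxs (by positivity)
        rw [← hc] at h3
        linarith
      calc cl⁻¹ * Real.exp (-(β * N * (fE β h s - fE β h x))) *
            u0⁻¹ * (Real.exp (β * N * fE β h a) * Sw N β h i)
          ≤ cl⁻¹ * Real.exp (-(β * N * (fE β h s - fE β h x))) *
            u0⁻¹ * (Real.exp (β * N * fE β h a) *
              ((4 / η * Real.exp (η / 2 * N)) *
                Real.exp (-β * N * (fE β h x - fE β h m' + fE β h a)))) := by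
            gcongr
            refine hSw.trans ?_
            gcongr
        _ = cl⁻¹ * u0⁻¹ * (4 / η) * (Real.exp (-(β * N * (fE β h s - fE β h x))) *
              Real.exp (β * N * fE β h a) * Real.exp (η / 2 * N) *
                Real.exp (-β * N * (fE β h x - fE β h m' + fE β h a))) := by ring
        _ = cl⁻¹ * u0⁻¹ * (4 / η) * Real.exp (-(η / 2 * N)) := by
            rw [← Real.exp_add, ← Real.exp_add, ← Real.exp_add]
            congr 2
            rw [hη]; ring
        _ ≤ cl⁻¹ * u0⁻¹ * (4 / η) * Real.exp (-c * (N * (x - s) ^ 2)) := by gcongr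
        _ ≤ K * Real.exp (-c * (N * (x - s) ^ 2)) := by
          have : 0 ≤ cl⁻¹ * u0⁻¹ * CS := by positivity
          gcongr
          linarith
  have hxa : Tendsto (fun N => xk N (aN N)) atTop (𝓝 a) := by
    rw [tendsto_iff_dist_tendsto_zero]
    refine squeeze_zero' (Eventually.of_forall fun _ => dist_nonneg) ?_ hlim
    filter_upwards [hab] with N hN
    rw [dist_comm]; exact hN
  have hxb : Tendsto (fun N => xk N (bN N)) atTop (𝓝 b) := by
    rw [tendsto_iff_dist_tendsto_zero]
    refine squeeze_zero' (Eventually.of_forall fun _ => dist_nonneg) ?_ hlim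
    filter_upwards [hbb] with N hN
    rw [dist_comm]; exact hN
  have hDs : 0 < Dl s := by
    have : 0 < 1 - s ^ 2 := by nlinarith
    unfold Dl; positivity
  have H2 : ∀ (t : ℝ) (k : ℕ → ℕ), (∀ᶠ N in atTop, k N ≤ N) →
      Tendsto (fun N : ℕ => Real.sqrt N * (xk N (k N) - s)) atTop (𝓝 t) →
      Tendsto (fun N => A N (k N)) atTop
        (𝓝 ((Dl s * Real.exp (-(β * fpp β s / 2) * t ^ 2))⁻¹ * ((1 + s) / 2)⁻¹ * Sl β a)) := by
    intro t k hk ht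
    obtain ⟨q1, q2⟩ := Q_tendsto β h s hβ (by linarith) (by linarith) W.fps k hk t ht
    have q3 := upR_tendsto β h s W.sh (by linarith) W.es k q1
    have q4 := inner_tendsto β h a m' c1 ((s - a) / 2) hβ a1 hm'1 hc1 ham' (by linarith) W.fpa hq1
      k hk
      ((q1.eventually (lt_mem_nhds (show a + (s - a) / 2 < s by linarith))).mono fun _ h => h.le)
      ((q1.eventually (gt_mem_nhds hm1)).mono fun _ h => h.le)
    have q5 := ((q2.inv₀ (by positivity)).mul (q3.inv₀ (by linarith))).mul q4
    refine q5.congr' ?_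
    filter_upwards [q1.eventually_lt hxb hsb, hxa.eventually_lt q1 has] with N e1 e2
    simp only [hA]
    rw [if_pos (mem_Ico.2 ⟨(lt_of_xk_lt e2).le, lt_of_xk_lt e1⟩)]
  have key := laplace_sum s (by linarith) (by linarith) A K c hK0 hc0 _ H1 H2
  refine key.congr' ?_
  filter_upwards [hbN, eventually_gt_atTop 0] with N hbN hN
  have hN' : (0 : ℝ) < N := by exact_mod_cast hN
  have hsN : Real.sqrt N ≠ 0 := (Real.sqrt_pos.2 hN').ne'
  simp only [hA]
  rw [← Finset.sum_filter]
  have : (range (N + 1)).filter (fun k => k ∈ Ico (aN N) (bN N)) = Ico (aN N) (bN N) := by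
    ext k; simp only [mem_filter, mem_range, mem_Ico]; omega
  rw [this, Finset.mul_sum, Finset.mul_sum]
  refine Finset.sum_congr rfl fun i _ => ?_
  have e1 : Real.exp (-(β * N * (fE β h s - fE β h a))) =
      (Real.exp (β * N * fE β h s))⁻¹ * Real.exp (β * N * fE β h a) := by
    rw [← Real.exp_neg, ← Real.exp_add]; congr 1; ring
  have e2 : (N : ℝ)⁻¹ = (Real.sqrt N)⁻¹ * (Real.sqrt N)⁻¹ := by
    rw [← mul_inv, Real.mul_self_sqrt hN'.le]
  rw [e1, e2]
  simp only [mul_inv]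
  ring

/-- sharp asymptotics of the CW mean metastable hitting time. -/
theorem cw_mean_hitting_time (β : ℝ) (hβ : 1 < β) :
    ∃ h₀ : ℝ, 0 < h₀ ∧ ∀ h : ℝ, 0 < h → h < h₀ →
    ∀ mminus mstar mplus : ℝ, DoubleWell β h mminus mstar mplus →
    ∀ mminusN mplusN : ℕ → ℝ,
      (∀ N, ClosestIn (Gamma N) mminus (mminusN N)) →
      (∀ N, ClosestIn (Gamma N) mplus (mplusN N)) →
    Tendsto (fun N : ℕ =>
      hitTimeExp (rCW N β h) (mminusN N) {mplusN N} /
        (Real.exp (β * N * (fE β h mstar - fE β h mminus)) *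
          (Real.pi / (1 + mstar)) * Real.sqrt ((1 - mstar ^ 2) / (1 - mminus ^ 2)) *
          ((N : ℝ) / (β * Real.sqrt (iteratedDeriv 2 (fE β h) mminus *
            (-(iteratedDeriv 2 (fE β h) mstar)))))))
      atTop (𝓝 1) := by
  refine ⟨1, one_pos, fun h hh _ a s b HW aN bN ha hb => ?_⟩
  have hβ0 : 0 < β := by linarith
  have W := wellFacts β h a s b hβ hh HW
  have a1 := W.a1
  have has := W.as
  have hsb := W.sb
  have b1 := W.b1
  rw [iteratedDeriv_fE β h a a1 (by linarith), iteratedDeriv_fE β h s (by linarith) (by linarith)]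
  have exA : ∀ N : ℕ, ∃ k, 0 < N → k ≤ N ∧ aN N = xk N k := by
    intro N
    rcases Nat.eq_zero_or_pos N with h0 | h0
    · exact ⟨0, fun h => by omega⟩
    · obtain ⟨k, h1, h2⟩ := (mem_Gamma_iff h0 _).1 (ha N).1
      exact ⟨k, fun _ => ⟨h1, h2⟩⟩
  have exB : ∀ N : ℕ, ∃ k, 0 < N → k ≤ N ∧ bN N = xk N k := by
    intro N
    rcases Nat.eq_zero_or_pos N with h0 | h0
    · exact ⟨0, fun h => by omega⟩
    · obtain ⟨k, h1, h2⟩ := (mem_Gamma_iff h0 _).1 (hb N).1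
      exact ⟨k, fun _ => ⟨h1, h2⟩⟩
  choose ka hka using exA
  choose kb hkb using exB
  have hab : ∀ᶠ N in atTop, |a - xk N (ka N)| ≤ 2 / N := by
    filter_upwards [eventually_gt_atTop 0] with N hN
    rw [← (hka N hN).2]
    exact closest_bound hN a1 (by linarith) (ha N)
  have hbb : ∀ᶠ N in atTop, |b - xk N (kb N)| ≤ 2 / N := by
    filter_upwards [eventually_gt_atTop 0] with N hN
    rw [← (hkb N hN).2]
    exact closest_bound hN (by linarith) b1 (hb N)
  have hkbN : ∀ᶠ N in atTop, kb N ≤ N := by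
    filter_upwards [eventually_gt_atTop 0] with N hN
    exact (hkb N hN).1
  have key := outer_tendsto β h a s b hβ0 hh W ka kb hkbN hab hbb
  have pa : 0 < 1 - a ^ 2 := by nlinarith
  have ps : 0 < 1 - s ^ 2 := by nlinarith
  have ps' : 0 < 1 + s := by linarith
  have hka0 := W.ka
  have hks0 : 0 < -fpp β s := by linarith [W.ks]
  rw [const_eq β a s hβ0 pa ps ps' W.ka W.ks] at key
  set L : ℝ := Real.pi / (1 + s) * Real.sqrt ((1 - s ^ 2) / (1 - a ^ 2)) /
        (β * Real.sqrt (fpp β a * (-fpp β s))) with hL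
  have hL0 : 0 < L := by positivity
  have key2 := key.div_const L
  rw [div_self hL0.ne'] at key2
  refine key2.congr' ?_
  have hlim : Tendsto (fun N : ℕ => (2 : ℝ) / N) atTop (𝓝 0) :=
    tendsto_const_nhds.div_atTop tendsto_natCast_atTop_atTop
  filter_upwards [eventually_gt_atTop 0, hab, hbb,
    hlim.eventually (gt_mem_nhds (show 0 < (b - a) / 4 by linarith))] with N hN h1 h2 h3
  have hN' : (0 : ℝ) < N := by exact_mod_cast hN
  have hlt : ka N < kb N := by
    apply lt_of_xk_lt (N := N)
    have := (abs_le.1 h1).1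
    have := (abs_le.1 h2).2
    linarith
  rw [(hka N hN).2, (hkb N hN).2, hitTimeExp_formula N β h hβ0 hlt (hkb N hN).1]
  have hden : Real.exp (β * N * (fE β h s - fE β h a)) *
      (Real.pi / (1 + s)) * Real.sqrt ((1 - s ^ 2) / (1 - a ^ 2)) *
      ((N : ℝ) / (β * Real.sqrt (fpp β a * (-fpp β s)))) =
      N * Real.exp (β * N * (fE β h s - fE β h a)) * L := by
    rw [hL]; ring
  rw [hden, Real.exp_neg]
  have := Real.exp_pos (β * N * (fE β h s - fE β h a))
  field_simp

end RDCW
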